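/- arXiv:2510.08221 — 4 statements merged into one kernel-verified Lean document; each statement's English description precedes it below -/
import Mathlib

section
/- If M is a subnormal subgroup of a finite group G, χ ∈ Irr(G), and ψ is an irreducible constituent of the restriction χ_M, then cod(ψ) divides cod(χ). -/
open CategoryTheory

noncomputable def repKer {G : Type} [Group G] (V : FDRep ℂ G) : Subgroup G :=
  (Representation.asGroupHom V.ρ).ker

noncomputable def cod {G : Type} [Group G] (V : FDRep ℂ G) : ℕ :=
  (repKer V).index / Module.finrank ℂ V

/-- `M` is a subnormal subgroup of `G`: there is a chain
`M = s 0 ⊴ s 1 ⊴ ⋯ ⊴ s n = ⊤`. -/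
def IsSubnormal {G : Type*} [Group G] (M : Subgroup G) : Prop :=
  ∃ (n : ℕ) (s : Fin (n + 1) → Subgroup G), s 0 = M ∧ s (Fin.last n) = ⊤ ∧
    ∀ i : Fin n, s i.castSucc ≤ s i.succ ∧
      ((s i.castSucc).subgroupOf (s i.succ)).Normal

/-- The restriction of a representation of `G` to a subgroup `M`. -/
noncomputable def resRep {G : Type} [Group G] (M : Subgroup G) (V : FDRep ℂ G) :
    FDRep ℂ M :=
  FDRep.of ((V.ρ.comp M.subtype : M →* _) : Representation ℂ M V)

/-!
Let `N` be normal in `G`, let `σ` be an irreducible representation of `G` and `τ` an irreducible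
constituent of its restriction to `N`. The stabilizer of `τ` acts projectively on `Hom_N(τ, σ)`,
and linearly after passing to the finite group of pairs `(g, u)`, where `u` has determinant one
and intertwines `τ` with its conjugate by `g`. For `q ∈ Hom_N(σ, τ)` and `f ∈ Hom_N(τ, σ)` the sum
of the conjugates of `f ∘ q` over `G / N` is a scalar by Schur's lemma. Letting `q` run through a
basis dual to one of `Hom_N(τ, σ)`, one finds that `∑ tr(γ⁻¹) γ`, where `γ` runs through lifts of
the cosets stabilizing `τ`, acts on `Hom_N(τ, σ)` as the scalar `|G : N| τ(1) / σ(1)`. The traces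
are algebraic integers, hence so is this scalar, and therefore `σ(1) ∣ |G : N| τ(1)`.

If `τ` is a constituent of the restriction of `σ` to a normal subgroup `M`, apply this to
`N = M ker σ`, on which `τ` extends: since `|G : ker σ| = |M : M ∩ ker σ| |G : N|` and
`M ∩ ker σ ≤ ker τ`, it follows that `cod τ ∣ cod σ`. The subnormal case is an induction along the
chain, passing at each step to a constituent of the restriction of `σ`.
-/

universe u v

namespace Codegree

open Module Representation

section Integrality

theorem isIntegral_trace_of_pow_eq_one {k U : Type*} [Field k] [IsAlgClosed k] [AddCommGroup U]
    [Module k U] [FiniteDimensional k U] {A : End k U} {n : ℕ} (hn : 0 < n) (hA : A ^ n = 1) :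
    IsIntegral ℤ (LinearMap.trace k U A) := by
  rw [End.trace_eq_sum_roots_charpoly_of_splits (IsAlgClosed.splits _)]
  refine IsIntegral.multiset_sum fun μ hμ ↦ IsIntegral.of_pow hn ?_
  obtain ⟨v, hv⟩ := ((End.hasEigenvalue_iff_isRoot_charpoly A μ).2
    (Polynomial.isRoot_of_mem_roots hμ)).exists_hasEigenvector
  have hpow : μ ^ n = 1 := smul_left_injective k hv.2 <| by
    simpa only [hA, End.one_apply, one_smul] using (hv.pow_apply n).symm
  exact hpow ▸ isIntegral_one

theorem isIntegral_of_sum_smul_eq {R k Γ U ι : Type*} [CommRing R] [Field k] [Algebra R k]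
    [Monoid Γ] [Finite Γ] [AddCommGroup U] [Module k U] [Nontrivial U] [Fintype ι]
    (D : Representation k Γ U) {a : ι → k} (ha : ∀ i, IsIntegral R (a i)) (γ : ι → Γ) {r : k}
    (h : ∀ u, ∑ i, a i • D (γ i) u = r • u) : IsIntegral R r := by
  obtain ⟨u₀, hu₀⟩ := exists_ne (0 : U)
  -- Multiplication by `r` preserves the finitely generated module `L`.
  let L : Submodule (integralClosure R k) U :=
    Submodule.span _ (Set.range fun g : Γ ↦ D g u₀)
  have hmem : u₀ ∈ L := Submodule.subset_span ⟨1, by simp⟩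
  have hstable (g : Γ) : L ≤ L.comap ((D g).restrictScalars (integralClosure R k)) := by
    refine Submodule.span_le.2 ?_
    rintro _ ⟨g', rfl⟩
    exact Submodule.subset_span ⟨g * g', by simp [map_mul]⟩
  have hr : IsIntegral (integralClosure R k) r := by
    refine isIntegral_of_smul_mem_submodule L (fun hL ↦ hu₀ ?_)
      (Submodule.fg_span (Set.finite_range _)) r fun u hu ↦ ?_
    · simpa [hL] using hmem
    · rw [← h u]
      exact L.sum_mem fun i _ ↦ L.smul_mem (⟨a i, ha i⟩ : integralClosure R k) (hstable _ hu)
  exact isIntegral_trans r hr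

theorem dvd_of_isIntegral_div {k : Type*} [Field k] [CharZero k] {a b : ℕ} (hb : b ≠ 0)
    (h : IsIntegral ℤ ((a : k) / b)) : b ∣ a := by
  have hmap : algebraMap ℚ k ((a : ℚ) / b) = (a : k) / b := by simp
  have hint : IsIntegral ℤ ((a : ℚ) / b) :=
    (isIntegral_algebraMap_iff (algebraMap ℚ k).injective).1 (hmap ▸ h)
  obtain ⟨z, hz⟩ := IsIntegrallyClosed.isIntegral_iff.1 hint
  rw [eq_intCast, eq_div_iff (Nat.cast_ne_zero.2 hb)] at hz
  exact Int.natCast_dvd_natCast.1 ⟨z, by exact_mod_cast (mul_comm (z : ℚ) b ▸ hz).symm⟩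

end Integrality

theorem sum_trace_smul_of_pairing {k Q U ι : Type*} [Field k] [AddCommGroup Q] [Module k Q]
    [AddCommGroup U] [Module k U] [FiniteDimensional k U] [Fintype ι] {β : Q →ₗ[k] U →ₗ[k] k}
    (hβ : Function.Surjective β) {A B : ι → End k U} {r : k}
    (h : ∀ q f f', ∑ i, β q (A i f') • B i f = (r * β q f) • f') (f : U) :
    ∑ i, LinearMap.trace k U (A i) • B i f = r • f := by
  let b := finBasis k U
  choose q hq using fun j ↦ hβ (b.coord j)
  have htrace (T : End k U) : LinearMap.trace k U T = ∑ j, β (q j) (T (b j)) := by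
    simp only [LinearMap.trace_eq_matrix_trace k b, Matrix.trace, Matrix.diag_apply,
      LinearMap.toMatrix_apply, hq, Basis.coord_apply]
  calc ∑ i, LinearMap.trace k U (A i) • B i f
      = ∑ j, ∑ i, β (q j) (A i (b j)) • B i f := by
        simp only [htrace, Finset.sum_smul]
        exact Finset.sum_comm
    _ = ∑ j, (r * β (q j) f) • b j := Finset.sum_congr rfl fun j _ ↦ h (q j) f (b j)
    _ = r • ∑ j, b.repr f j • b j := by
        simp only [hq, mul_smul, Basis.coord_apply, Finset.smul_sum]
    _ = r • f := by rw [b.sum_repr]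

section Irreducible

theorem nontrivial_of_isIrreducible {k G V : Type*} [Field k] [Monoid G] [AddCommGroup V]
    [Module k V] (ρ : Representation k G V) [ρ.IsIrreducible] : Nontrivial V :=
  IsSimpleModule.nontrivial (MonoidAlgebra k G) ρ.asModule

theorem nontrivial_subrepresentation {k G V : Type*} [Field k] [Monoid G] [AddCommGroup V]
    [Module k V] [Nontrivial V] (ρ : Representation k G V) : Nontrivial (Subrepresentation ρ) :=
  ⟨⊥, ⊤, fun h ↦ bot_ne_top (congrArg Subrepresentation.toSubmodule h)⟩

theorem isIrreducible_of_surjective {k H G V W : Type*} [Field k] [Monoid H] [Monoid G]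
    [AddCommGroup V] [Module k V] [Nontrivial V] [AddCommGroup W] [Module k W]
    {τ : Representation k H W} [τ.IsIrreducible] {ρ : Representation k G V} (f : W →ₗ[k] V)
    (hf : Function.Surjective f) (h : ∀ x, ∃ y, ∀ w, f (τ x w) = ρ y (f w)) :
    ρ.IsIrreducible where
  toNontrivial := nontrivial_subrepresentation ρ
  eq_bot_or_eq_top S := by
    let T : Subrepresentation τ := ⟨S.toSubmodule.comap f, fun x w hw ↦ by
      obtain ⟨y, hy⟩ := h x
      exact Submodule.mem_comap.2 (hy w ▸ S.apply_mem_toSubmodule y hw)⟩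
    have hT : S.toSubmodule = T.toSubmodule.map f :=
      (Submodule.map_comap_eq_of_surjective hf _).symm
    refine (eq_bot_or_eq_top T).imp (fun hbot ↦ ?_) fun htop ↦ ?_
    · exact Subrepresentation.toSubmodule_injective
        (hT.trans (hbot ▸ Submodule.map_bot f))
    · exact Subrepresentation.toSubmodule_injective
        (hT.trans (htop ▸ (Submodule.map_top f).trans (LinearMap.range_eq_top.2 hf)))

theorem isIrreducible_of_finrank_eq_one {k G V : Type*} [Field k] [Monoid G] [AddCommGroup V]
    [Module k V] (ρ : Representation k G V) (h : finrank k V = 1) : ρ.IsIrreducible where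
  toNontrivial :=
    have : Nontrivial V := nontrivial_of_finrank_eq_succ h
    nontrivial_subrepresentation ρ
  eq_bot_or_eq_top S :=
    have : IsSimpleModule k V := isSimpleModule_iff_finrank_eq_one.2 h
    (eq_bot_or_eq_top S.toSubmodule).imp (fun hS ↦ Subrepresentation.toSubmodule_injective hS)
      fun hS ↦ Subrepresentation.toSubmodule_injective hS

theorem isIrreducible_toRepresentation_of_isAtom {k G V : Type*} [Field k] [Monoid G]
    [AddCommGroup V] [Module k V] {ρ : Representation k G V} {S : Subrepresentation ρ}
    (hS : IsAtom S) : S.toRepresentation.IsIrreducible where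
  toNontrivial :=
    have : Nontrivial S.toSubmodule := Submodule.nontrivial_iff_ne_bot.2 fun h ↦
      hS.1 (Subrepresentation.toSubmodule_injective h)
    nontrivial_subrepresentation _
  eq_bot_or_eq_top T := by
    let T' : Subrepresentation ρ := ⟨T.toSubmodule.map S.toSubmodule.subtype, by
      rintro g _ ⟨v, hv, rfl⟩
      exact ⟨_, T.apply_mem_toSubmodule g hv, rfl⟩⟩
    have hT' : T' ≤ S := Submodule.map_subtype_le _ _
    have hinj := Submodule.map_injective_of_injective S.toSubmodule.injective_subtype
    refine (hS.le_iff.1 hT').imp (fun h ↦ ?_) fun h ↦ ?_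
    · exact Subrepresentation.toSubmodule_injective
        (hinj ((congrArg Subrepresentation.toSubmodule h).trans (Submodule.map_bot _).symm))
    · exact Subrepresentation.toSubmodule_injective
        (hinj ((congrArg Subrepresentation.toSubmodule h).trans
          (Submodule.map_subtype_top _).symm))

theorem exists_isIrreducible_apply_ne_zero {k G V : Type*} [Field k] [Group G] [Finite G]
    [NeZero (Nat.card G : k)] [AddCommGroup V] [Module k V] {ρ : Representation k G V} {v : V}
    (hv : v ≠ 0) :
    ∃ S : Subrepresentation ρ, S.toRepresentation.IsIrreducible ∧
      ∃ p : IntertwiningMap ρ S.toRepresentation, p v ≠ 0 := by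
  have hjac : (v : ρ.asModule) ∉ Module.jacobson (MonoidAlgebra k G) ρ.asModule := by
    rwa [IsSemisimpleModule.jacobson_eq_bot]
  obtain ⟨m, hm, hvm⟩ : ∃ m : Submodule (MonoidAlgebra k G) ρ.asModule, IsCoatom m ∧ v ∉ m := by
    by_contra! h
    exact hjac ((Submodule.mem_sInf (M := ρ.asModule)).2 h)
  obtain ⟨C, hC⟩ := exists_isCompl m
  have hS : IsAtom (Subrepresentation.ofSubmodule' C) :=
    (Subrepresentation.subrepresentationSubmoduleOrderIso.symm.isAtom_iff C).2
      (hC.symm.isAtom_iff_isCoatom.2 hm)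
  let P := (IntertwiningMap.equivLinearMapAsModule ρ ρ).symm (Submodule.projection C m hC.symm)
  refine ⟨_, isIrreducible_toRepresentation_of_isAtom hS,
    ⟨P.toLinearMap.codRestrict _ (Submodule.projection_apply_mem hC.symm), fun g ↦ ?_⟩, fun h ↦ ?_⟩
  · exact LinearMap.ext fun w ↦ Subtype.ext (IntertwiningMap.isIntertwining ρ ρ P g w)
  · exact hvm ((Submodule.projection_apply_eq_zero_iff hC.symm).1 (congrArg Subtype.val h))

theorem exists_leftInverse_of_injective {k G V W : Type*} [Field k] [Group G] [Finite G]
    [NeZero (Nat.card G : k)] [AddCommGroup V] [Module k V] [AddCommGroup W] [Module k W]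
    {ρ : Representation k G V} {σ : Representation k G W} (f : IntertwiningMap ρ σ)
    (hf : Function.Injective f) : ∃ q : IntertwiningMap σ ρ, ∀ v, q (f v) = v := by
  obtain ⟨q, hq⟩ := MonoidAlgebra.exists_leftInverse_of_injective
    (IntertwiningMap.equivLinearMapAsModule ρ σ f) (LinearMap.ker_eq_bot.2 hf)
  exact ⟨(IntertwiningMap.equivLinearMapAsModule σ ρ).symm q, LinearMap.congr_fun hq⟩

end Irreducible

section Schur

variable {k G V W : Type*} [Field k] [CharZero k] [AddCommGroup V] [Module k V]
  [AddCommGroup W] [Module k W] [FiniteDimensional k W]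

theorem apply_eq_trace_div_finrank_smul [IsAlgClosed k] [Monoid G] {τ : Representation k G W}
    [τ.IsIrreducible] (f : IntertwiningMap τ τ) (w : W) :
    f w = (LinearMap.trace k W f.toLinearMap / finrank k W) • w := by
  obtain ⟨c, rfl⟩ := IsIrreducible.algebraMap_intertwiningMap_bijective_of_isAlgClosed.2 f
  have := nontrivial_of_isIrreducible τ
  have hW : (finrank k W : k) ≠ 0 := Nat.cast_ne_zero.2 finrank_pos.ne'
  have hc : (algebraMap k (IntertwiningMap τ τ) c).toLinearMap = c • LinearMap.id := rfl
  rw [hc, map_smul, LinearMap.trace_id, smul_eq_mul, mul_div_cancel_right₀ _ hW]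
  rfl

/-- The pairing `Hom(ρ, τ) × Hom(τ, ρ) → k` for irreducible `τ`, sending `(q, f)` to the scalar
by which `q ∘ f` acts, written as a normalized trace so that it is visibly bilinear. -/
noncomputable def schurPairing [Monoid G] (ρ : Representation k G V) (τ : Representation k G W) :
    IntertwiningMap ρ τ →ₗ[k] IntertwiningMap τ ρ →ₗ[k] k :=
  LinearMap.mk₂ k
    (fun q f ↦ LinearMap.trace k W (q.toLinearMap ∘ₗ f.toLinearMap) / finrank k W)
    (fun _ _ _ ↦ by simp [LinearMap.add_comp, add_div])
    (fun _ _ _ ↦ by simp [LinearMap.smul_comp, mul_div_assoc])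
    (fun _ _ _ ↦ by simp [LinearMap.comp_add, add_div])
    (fun _ _ _ ↦ by simp [LinearMap.comp_smul, mul_div_assoc])

theorem trace_comp_eq_finrank_mul_schurPairing [Monoid G] [FiniteDimensional k V]
    {ρ : Representation k G V} {τ : Representation k G W} [τ.IsIrreducible]
    (q : IntertwiningMap ρ τ) (f : IntertwiningMap τ ρ) :
    LinearMap.trace k V (f.toLinearMap ∘ₗ q.toLinearMap) =
      finrank k W * schurPairing ρ τ q f := by
  have := nontrivial_of_isIrreducible τ
  have hW : (finrank k W : k) ≠ 0 := Nat.cast_ne_zero.2 finrank_pos.ne'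
  rw [LinearMap.trace_comp_comm']
  exact (mul_div_cancel₀ _ hW).symm

variable [IsAlgClosed k]

theorem schurPairing_smul [Monoid G] {ρ : Representation k G V} {τ : Representation k G W}
    [τ.IsIrreducible] (q : IntertwiningMap ρ τ) (f : IntertwiningMap τ ρ) (w : W) :
    schurPairing ρ τ q f • w = q (f w) :=
  (apply_eq_trace_div_finrank_smul (q.comp f) w).symm

theorem schurPairing_surjective [Group G] [Finite G] [FiniteDimensional k V]
    {ρ : Representation k G V} {τ : Representation k G W} [τ.IsIrreducible] :
    Function.Surjective (schurPairing ρ τ) := by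
  rw [← LinearMap.flip_injective_iff₁, injective_iff_map_eq_zero]
  intro f hf
  refine (IsIrreducible.injective_or_eq_zero f).resolve_left fun hinj ↦ ?_
  obtain ⟨q, hq⟩ := exists_leftInverse_of_injective f hinj
  have := nontrivial_of_isIrreducible τ
  obtain ⟨w, hw⟩ := exists_ne (0 : W)
  refine hw ?_
  rw [← hq w, ← schurPairing_smul, ← LinearMap.flip_apply, hf, LinearMap.zero_apply, zero_smul]

end Schur

/-- The restriction of a representation to a subgroup. -/
abbrev restrict {k G V : Type*} [CommSemiring k] [Group G] [AddCommMonoid V] [Module k V]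
    (σ : Representation k G V) (H : Subgroup G) : Representation k H V :=
  MonoidHom.comp σ H.subtype

section CosetSum

theorem sum_out_mem_invariants {k G V : Type*} [CommRing k] [Group G] [AddCommGroup V]
    [Module k V] (ρ : Representation k G V) (H : Subgroup G) [Fintype (G ⧸ H)] {v : V}
    (hv : ∀ h : H, ρ h v = v) : ∑ c : G ⧸ H, ρ c.out v ∈ ρ.invariants := by
  have hcoset (g : G) : ρ (g : G ⧸ H).out v = ρ g v := by
    obtain ⟨h, hh⟩ := QuotientGroup.mk_out_eq_mul H g
    rw [hh, map_mul, Module.End.mul_apply, hv h]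
  intro g
  rw [map_sum]
  refine (Finset.sum_congr rfl fun c _ ↦ ?_).trans
    (Equiv.sum_comp (MulAction.toPerm g) fun c : G ⧸ H ↦ ρ c.out v)
  rw [← Module.End.mul_apply, ← map_mul, ← hcoset, MulAction.toPerm_apply, ← smul_eq_mul,
    MulAction.Quotient.mk_smul_out]

theorem sum_out_conj_apply {k G V : Type*} [Field k] [IsAlgClosed k] [CharZero k] [Group G]
    [AddCommGroup V] [Module k V] [FiniteDimensional k V] (σ : Representation k G V)
    [σ.IsIrreducible] (H : Subgroup G) [Fintype (G ⧸ H)]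
    (f : IntertwiningMap (restrict σ H) (restrict σ H)) (v : V) :
    ∑ c : G ⧸ H, σ c.out (f (σ c.out⁻¹ v)) =
      (H.index * LinearMap.trace k V f.toLinearMap / finrank k V) • v := by
  have hf (h : H) : linHom σ σ h f.toLinearMap = f.toLinearMap :=
    (mem_linHom_invariants_iff_isIntertwining f.toLinearMap).2 ⟨f.isIntertwining⟩ h
  let F := invariantsEquivIntertwiningMap σ σ ⟨_, sum_out_mem_invariants (linHom σ σ) H hf⟩
  have hF : F.toLinearMap = ∑ c : G ⧸ H, σ c.out ∘ₗ f.toLinearMap ∘ₗ σ c.out⁻¹ := rfl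
  have htrace (g : G) : LinearMap.trace k V (σ g ∘ₗ f.toLinearMap ∘ₗ σ g⁻¹) =
      LinearMap.trace k V f.toLinearMap := by
    rw [LinearMap.trace_comp_comm', LinearMap.comp_assoc, ← Module.End.mul_eq_comp (σ g⁻¹),
      ← map_mul, inv_mul_cancel, map_one]
    rfl
  have hFv := apply_eq_trace_div_finrank_smul F v
  rw [← IntertwiningMap.toLinearMap_apply, hF, LinearMap.sum_apply] at hFv
  simpa only [map_sum, htrace, Finset.sum_const, Finset.card_univ, nsmul_eq_mul,
    ← Nat.card_eq_fintype_card, LinearMap.comp_apply, IntertwiningMap.toLinearMap_apply,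
    Subgroup.index] using hFv

end CosetSum

section Twist

theorem exists_specialLinearGroup_smul_eq {k W : Type*} [Field k] [IsAlgClosed k]
    [AddCommGroup W] [Module k W] [FiniteDimensional k W] [Nontrivial W] (e : W ≃ₗ[k] W) :
    ∃ (z : k) (u : SpecialLinearGroup k W), ∀ w, u • w = z • e w := by
  have hdet : LinearMap.det (e : W →ₗ[k] W) ≠ 0 := (LinearEquiv.isUnit_det' e).ne_zero
  obtain ⟨z, hz⟩ := IsAlgClosed.exists_pow_nat_eq (LinearMap.det (e : W →ₗ[k] W))⁻¹
    (finrank_pos (R := k) (M := W))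
  have hz₀ : z ≠ 0 := by
    rintro rfl
    exact inv_ne_zero hdet (hz.symm.trans (zero_pow finrank_pos.ne'))
  refine ⟨z, ⟨e.trans (LinearEquiv.smulOfNeZero k W z hz₀), Units.ext ?_⟩, fun w ↦ rfl⟩
  have hcoe : (e.trans (LinearEquiv.smulOfNeZero k W z hz₀) : W →ₗ[k] W) = z • e := rfl
  rw [LinearEquiv.coe_det, hcoe, LinearMap.det_smul, hz, inv_mul_cancel₀ hdet, Units.val_one]

variable {k G W X : Type*} [Field k] [Group G] [AddCommGroup W] [Module k W] [AddCommGroup X]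
  [Module k X] {N : Subgroup G} [N.Normal]

/-- The pairs `(g, u)` for which `u` intertwines `τ` with its conjugate by `g`. Only the `u` of
determinant one are kept, so that the group is finite when `G` is finite and `τ` irreducible. -/
def twistGroup (τ : Representation k N W) : Subgroup (G × SpecialLinearGroup k W) where
  carrier := {p | ∀ n w, p.2 • τ n w = τ (MulAut.conjNormal p.1 n) (p.2 • w)}
  one_mem' n w := by simp only [Prod.fst_one, Prod.snd_one, one_smul, map_one, MulAut.one_apply]
  mul_mem' {p q} hp hq n w := by
    simp only [Prod.fst_mul, Prod.snd_mul, mul_smul, map_mul, MulAut.mul_apply, hq n w, hp _ _]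
  inv_mem' {p} hp n w := by
    rw [Prod.snd_inv, inv_smul_eq_iff, hp, smul_inv_smul, Prod.fst_inv, map_inv,
      MulAut.apply_inv_self]

theorem exists_mem_twistGroup [IsAlgClosed k] [FiniteDimensional k W] (τ : Representation k N W)
    [τ.IsIrreducible] (g : G) {f : W →ₗ[k] W}
    (hf : ∀ n w, f (τ n w) = τ (MulAut.conjNormal g n) (f w)) (hf₀ : f ≠ 0) :
    ∃ u, (g, u) ∈ twistGroup τ := by
  have := nontrivial_of_isIrreducible τ
  let F : IntertwiningMap τ (τ.comp (MulAut.conjNormal g : N ≃* N).toMonoidHom) :=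
    ⟨f, fun n ↦ LinearMap.ext (hf n)⟩
  have hinj : Function.Injective f := (IsIrreducible.injective_or_eq_zero F).resolve_right
    fun hF ↦ hf₀ (congrArg IntertwiningMap.toLinearMap hF)
  obtain ⟨z, u, hu⟩ :=
    exists_specialLinearGroup_smul_eq (LinearEquiv.ofInjectiveEndo f hinj)
  refine ⟨u, fun n w ↦ ?_⟩
  simp only [hu, LinearEquiv.coe_ofInjectiveEndo, hf, map_smul]

theorem mem_center_of_one_mem_twistGroup [IsAlgClosed k] [FiniteDimensional k W]
    {τ : Representation k N W} [τ.IsIrreducible] {u : SpecialLinearGroup k W}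
    (hu : (1, u) ∈ twistGroup τ) : u ∈ Subgroup.center (SpecialLinearGroup k W) := by
  have hcomm (n : N) (w : W) : u • τ n w = τ n (u • w) := by
    simpa only [map_one, MulAut.one_apply] using hu n w
  obtain ⟨c, hc⟩ := IsIrreducible.algebraMap_intertwiningMap_bijective_of_isAlgClosed.2
    (⟨u.val, fun n ↦ LinearMap.ext (hcomm n)⟩ : IntertwiningMap τ τ)
  have hcu (w : W) : u • w = c • w := (DFunLike.congr_fun hc w).symm
  refine Subgroup.mem_center_iff.2 fun v ↦ SpecialLinearGroup.ext _ _ fun w ↦ ?_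
  change v • u • w = u • v • w
  rw [hcu, hcu, smul_comm]

instance [IsAlgClosed k] [FiniteDimensional k W] [Finite G] (τ : Representation k N W)
    [τ.IsIrreducible] : Finite (twistGroup τ) := by
  have := nontrivial_of_isIrreducible τ
  have : NeZero (max (finrank k W) 1) := ⟨by lia⟩
  have hcenter : Finite (Subgroup.center (SpecialLinearGroup k W)) :=
    .of_equiv _ SpecialLinearGroup.centerEquivRootsOfUnity.symm.toEquiv
  let fst : twistGroup τ →* G := (MonoidHom.fst _ _).comp (twistGroup τ).subtype
  refine fst.finite_iff_finite_ker_range.2 ⟨?_, inferInstance⟩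
  have hker (γ : fst.ker) : γ.1.1.2 ∈ Subgroup.center (SpecialLinearGroup k W) := by
    refine mem_center_of_one_mem_twistGroup (τ := τ) ?_
    rw [← (γ.2 : γ.1.1.1 = 1)]
    exact γ.1.2
  refine Finite.of_injective (fun γ ↦ (⟨γ.1.1.2, hker γ⟩ : Subgroup.center _)) ?_
  rintro ⟨γ, hγ⟩ ⟨δ, hδ⟩ h
  exact Subtype.ext (Subtype.ext (Prod.ext (hγ.trans hδ.symm) (congrArg Subtype.val h)))

theorem apply_apply_eq_conjNormal (σ : Representation k G X) (g : G) (n : N) (x : X) :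
    σ g (σ n x) = σ (MulAut.conjNormal g n : N) (σ g x) := by
  rw [← End.mul_apply, ← End.mul_apply, ← map_mul, ← map_mul, MulAut.conjNormal_apply,
    inv_mul_cancel_right]

theorem apply_apply_inv_smul (σ : Representation k G X) {τ : Representation k N W}
    (γ : twistGroup τ) (f : IntertwiningMap τ (restrict σ N)) (n : N) (w : W) :
    σ γ.1.1 (f (γ.1.2⁻¹ • τ n w)) = σ n (σ γ.1.1 (f (γ.1.2⁻¹ • w))) := by
  have hγ : γ.1.2⁻¹ • τ n w = τ (MulAut.conjNormal γ.1.1⁻¹ n) (γ.1.2⁻¹ • w) := γ⁻¹.2 n w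
  rw [hγ, IntertwiningMap.isIntertwining, MonoidHom.comp_apply, Subgroup.subtype_apply,
    apply_apply_eq_conjNormal, map_inv, MulAut.apply_inv_self]

/-- The action of the twist group on `Hom_N(τ, σ)` in which `(g, u)` sends `f` to
`σ g ∘ f ∘ u⁻¹`. -/
def twistRep (σ : Representation k G X) (τ : Representation k N W) :
    Representation k (twistGroup τ) (IntertwiningMap τ (restrict σ N)) where
  toFun γ :=
    { toFun f := ⟨σ γ.1.1 ∘ₗ f.toLinearMap ∘ₗ DistribSMul.toLinearMap k W γ.1.2⁻¹,
        fun n ↦ LinearMap.ext (apply_apply_inv_smul σ γ f n)⟩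
      map_add' f f' := by ext w; simp
      map_smul' a f := by ext w; simp }
  map_one' := by ext f w; simp
  map_mul' γ δ := by ext f w; simp [mul_smul]

theorem twistRep_apply_apply (σ : Representation k G X) (τ : Representation k N W)
    (γ : twistGroup τ) (f : IntertwiningMap τ (restrict σ N)) (w : W) :
    twistRep σ τ γ f w = σ γ.1.1 (f (γ.1.2⁻¹ • w)) := rfl

variable [IsAlgClosed k] [FiniteDimensional k W]

theorem exists_mem_twistGroup_of_comp_ne_zero {σ : Representation k G X}
    {τ : Representation k N W} [τ.IsIrreducible] (q : IntertwiningMap (restrict σ N) τ)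
    (f : IntertwiningMap τ (restrict σ N)) {g : G} {w : W}
    (h : q (σ g⁻¹ (f w)) ≠ 0) : ∃ u, (g, u) ∈ twistGroup τ := by
  let f' : W →ₗ[k] W := q.toLinearMap ∘ₗ σ g⁻¹ ∘ₗ f.toLinearMap
  have hf' (n : N) (w : W) : f' (τ n w) = τ (MulAut.conjNormal g⁻¹ n) (f' w) := by
    have hf : f (τ n w) = σ n (f w) := IntertwiningMap.isIntertwining _ _ f n w
    have hq := IntertwiningMap.isIntertwining _ _ q (MulAut.conjNormal g⁻¹ n) (σ g⁻¹ (f w))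
    rwa [MonoidHom.comp_apply, Subgroup.subtype_apply, ← apply_apply_eq_conjNormal, ← hf] at hq
  obtain ⟨u, hu⟩ := exists_mem_twistGroup τ g⁻¹ hf' fun h₀ ↦ h (LinearMap.congr_fun h₀ w)
  exact ⟨u⁻¹, by simpa using inv_mem hu⟩

theorem schurPairing_smul_twistRep_apply {σ : Representation k G X} {τ : Representation k N W}
    [CharZero k] [τ.IsIrreducible] (q : IntertwiningMap (restrict σ N) τ)
    (f f' : IntertwiningMap τ (restrict σ N)) (γ : twistGroup τ) (w : W) :
    schurPairing _ τ q (twistRep σ τ γ⁻¹ f') • twistRep σ τ γ f w =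
      σ γ.1.1 (f (q (σ γ.1.1⁻¹ (f' w)))) := by
  have hf' : σ γ.1.1⁻¹ (f' w) = twistRep σ τ γ⁻¹ f' (γ.1.2⁻¹ • w) :=
    congrArg (fun w ↦ σ γ.1.1⁻¹ (f' w)) (inv_smul_smul γ.1.2⁻¹ w).symm
  rw [hf', ← schurPairing_smul q, map_smul, map_smul, twistRep_apply_apply]

end Twist

section NormalSubgroup

variable {k G W X : Type*} [Field k] [IsAlgClosed k] [CharZero k] [Group G] [AddCommGroup W]
  [Module k W] [FiniteDimensional k W] [AddCommGroup X] [Module k X] [FiniteDimensional k X]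
  {N : Subgroup G} {σ : Representation k G X} [σ.IsIrreducible]
  {τ : Representation k N W} [τ.IsIrreducible]

theorem sum_out_conj_comp_apply [Fintype (G ⧸ N)] (q : IntertwiningMap (restrict σ N) τ)
    (f : IntertwiningMap τ (restrict σ N)) (x : X) :
    ∑ c : G ⧸ N, σ c.out (f (q (σ c.out⁻¹ x))) =
      (N.index * finrank k W / finrank k X * schurPairing _ τ q f) • x := by
  have h := sum_out_conj_apply σ N (f.comp q) x
  have htrace : LinearMap.trace k X (f.comp q).toLinearMap =
      finrank k W * schurPairing _ τ q f := trace_comp_eq_finrank_mul_schurPairing q f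
  rw [htrace, ← mul_assoc, ← div_mul_eq_mul_div] at h
  exact h

variable [N.Normal]

theorem sum_twistRep_apply_of_lift [Finite (G ⧸ N)]
    [Fintype {c : G ⧸ N // ∃ u, (c.out, u) ∈ twistGroup τ}]
    {γ : {c : G ⧸ N // ∃ u, (c.out, u) ∈ twistGroup τ} → twistGroup τ}
    (hγ : ∀ c, (γ c).1.1 = c.1.out) (q : IntertwiningMap (restrict σ N) τ)
    (f f' : IntertwiningMap τ (restrict σ N)) :
    ∑ c, schurPairing _ τ q (twistRep σ τ (γ c)⁻¹ f') • twistRep σ τ (γ c) f =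
      (N.index * finrank k W / finrank k X * schurPairing _ τ q f) • f' := by
  have := Fintype.ofFinite (G ⧸ N)
  refine DFunLike.ext _ _ fun w ↦ ?_
  have hterm (c) : (schurPairing _ τ q (twistRep σ τ (γ c)⁻¹ f') • twistRep σ τ (γ c) f) w =
      σ c.1.out (f (q (σ c.1.out⁻¹ (f' w)))) := by
    rw [← hγ, ← schurPairing_smul_twistRep_apply, IntertwiningMap.smul_apply]
  rw [IntertwiningMap.smul_apply, ← sum_out_conj_comp_apply, IntertwiningMap.sum_apply]
  refine Fintype.sum_of_injective Subtype.val Subtype.val_injective _ _ (fun c hc ↦ ?_) hterm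
  have hq : q (σ c.out⁻¹ (f' w)) = 0 := by
    by_contra hne
    obtain ⟨u, hu⟩ := exists_mem_twistGroup_of_comp_ne_zero q f' hne
    exact hc ⟨⟨c, u, hu⟩, rfl⟩
  rw [hq, map_zero, map_zero]

theorem finrank_dvd_index_mul_finrank [Finite G] {f : IntertwiningMap τ (restrict σ N)}
    (hf : f ≠ 0) : finrank k X ∣ N.index * finrank k W := by
  have := nontrivial_of_isIrreducible σ
  have : Nontrivial (IntertwiningMap τ (restrict σ N)) := ⟨f, 0, hf⟩
  have := Fintype.ofFinite {c : G ⧸ N // ∃ u, (c.out, u) ∈ twistGroup τ}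
  refine dvd_of_isIntegral_div (k := k) finrank_pos.ne' ?_
  let γ (c : {c : G ⧸ N // ∃ u, (c.out, u) ∈ twistGroup τ}) : twistGroup τ :=
    ⟨(c.1.out, c.2.choose), c.2.choose_spec⟩
  rw [Nat.cast_mul]
  refine isIntegral_of_sum_smul_eq (twistRep σ τ) (fun c ↦ ?_) γ
    (sum_trace_smul_of_pairing schurPairing_surjective
      (sum_twistRep_apply_of_lift (γ := γ) fun _ ↦ rfl))
  refine isIntegral_trace_of_pow_eq_one (orderOf_pos (γ c)) ?_
  rw [← map_pow, inv_pow, pow_orderOf_eq_one, inv_one, map_one]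

end NormalSubgroup

section Codegree

/-- The codegree `|G : ker χ| / χ(1)` of the character `χ` of a representation. The division of
natural numbers is exact when the representation is irreducible. -/
noncomputable def codegree {k G V : Type*} [Field k] [Group G] [AddCommGroup V] [Module k V]
    (σ : Representation k G V) : ℕ :=
  (MonoidHom.ker σ).index / finrank k V

variable {k G V : Type*} [Field k] [IsAlgClosed k] [CharZero k] [Group G] [Finite G]
  [AddCommGroup V] [Module k V] [FiniteDimensional k V]

theorem finrank_dvd_index_ker (σ : Representation k G V) [σ.IsIrreducible] :
    finrank k V ∣ (MonoidHom.ker σ).index := by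
  have := nontrivial_of_isIrreducible σ
  obtain ⟨v, hv⟩ := exists_ne (0 : V)
  let τ : Representation k (MonoidHom.ker σ) k := Representation.trivial k _ k
  let f : IntertwiningMap τ (restrict σ (MonoidHom.ker σ)) :=
    ⟨LinearMap.toSpanSingleton k V v, fun n ↦ by
      have hn : σ n = 1 := n.2
      ext
      simp [hn, τ, restrict]⟩
  have : τ.IsIrreducible := isIrreducible_of_finrank_eq_one τ (finrank_self k)
  have hf : f ≠ 0 := fun h ↦ hv (by simpa [f] using DFunLike.congr_fun h 1)
  simpa using finrank_dvd_index_mul_finrank hf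

theorem codegree_mul_finrank (σ : Representation k G V) [σ.IsIrreducible] :
    codegree σ * finrank k V = (MonoidHom.ker σ).index :=
  Nat.div_mul_cancel (finrank_dvd_index_ker σ)

end Codegree

section Subnormal

variable {k H G W X : Type*} [Field k] [IsAlgClosed k] [CharZero k] [Group H] [Group G] [Finite G]
  [AddCommGroup W] [Module k W] [FiniteDimensional k W] [AddCommGroup X] [Module k X]
  [FiniteDimensional k X] {j : H →* G} [j.range.Normal] {σ : Representation k G X}
  [σ.IsIrreducible] {τ : Representation k H W} [τ.IsIrreducible]

theorem finrank_dvd_index_range_sup_ker_mul_finrank {f : IntertwiningMap τ (MonoidHom.comp σ j)}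
    (hf : f ≠ 0) : finrank k X ∣ (j.range ⊔ MonoidHom.ker σ).index * finrank k W := by
  have hinj : Function.Injective f.toLinearMap :=
    (IsIrreducible.injective_or_eq_zero f).resolve_right hf
  have := nontrivial_of_isIrreducible τ
  have haction (n : ↥(j.range ⊔ MonoidHom.ker σ)) : ∃ h, ∀ w, σ n (f w) = f (τ h w) := by
    obtain ⟨_, ⟨h, rfl⟩, g, hg : σ g = 1, hn⟩ := Subgroup.mem_sup_of_normal_right.1 n.2
    refine ⟨h, fun w ↦ ?_⟩
    rw [IntertwiningMap.isIntertwining, ← hn, map_mul, hg, mul_one, MonoidHom.comp_apply]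
  let S : Subrepresentation (restrict σ (j.range ⊔ MonoidHom.ker σ)) :=
    ⟨LinearMap.range f.toLinearMap, by
      rintro n _ ⟨w, rfl⟩
      obtain ⟨h, hh⟩ := haction n
      exact ⟨τ h w, (hh w).symm⟩⟩
  have hnontrivial : Nontrivial S.toSubmodule :=
    (LinearEquiv.ofInjective f.toLinearMap hinj).symm.toEquiv.nontrivial
  have hirr : S.toRepresentation.IsIrreducible :=
    isIrreducible_of_surjective (τ := τ) f.toLinearMap.rangeRestrict
      f.toLinearMap.surjective_rangeRestrict fun h ↦
        ⟨⟨j h, Subgroup.mem_sup_left ⟨h, rfl⟩⟩, fun w ↦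
          Subtype.ext (IntertwiningMap.isIntertwining _ _ f h w)⟩
  let ι : IntertwiningMap S.toRepresentation (restrict σ (j.range ⊔ MonoidHom.ker σ)) :=
    ⟨S.toSubmodule.subtype, fun _ ↦ rfl⟩
  have hι : ι ≠ 0 := fun h ↦ by
    obtain ⟨x, hx⟩ := exists_ne (0 : S.toSubmodule)
    exact hx (Subtype.ext (DFunLike.congr_fun h x))
  rw [(LinearEquiv.ofInjective f.toLinearMap hinj).finrank_eq]
  exact finrank_dvd_index_mul_finrank hι

theorem codegree_dvd_codegree_of_normal_range [Finite H]
    {f : IntertwiningMap τ (MonoidHom.comp σ j)} (hf : f ≠ 0) : codegree τ ∣ codegree σ := by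
  have hinj := (IsIrreducible.injective_or_eq_zero f).resolve_right hf
  have := nontrivial_of_isIrreducible σ
  have := nontrivial_of_isIrreducible τ
  let K := MonoidHom.ker σ
  have hdim : finrank k X ∣ (j.range ⊔ K).index * finrank k W :=
    finrank_dvd_index_range_sup_ker_mul_finrank hf
  have hker : K.comap j ≤ MonoidHom.ker τ := fun h hh ↦ by
    have hσ : σ (j h) = 1 := hh
    refine MonoidHom.mem_ker.2 (LinearMap.ext fun w ↦ hinj ?_)
    rw [IntertwiningMap.isIntertwining, MonoidHom.comp_apply, hσ]
    rfl
  have hindex : K.index = (K.comap j).index * (j.range ⊔ K).index := by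
    rw [Subgroup.index_comap, ← Subgroup.relIndex_sup_right,
      Subgroup.relIndex_mul_index le_sup_right]
  obtain ⟨r, hr⟩ := hdim
  obtain ⟨s, hs⟩ := Subgroup.index_dvd_of_le hker
  refine ⟨s * r, Nat.eq_of_mul_eq_mul_right (finrank_pos (R := k) (M := X)) ?_⟩
  calc codegree σ * finrank k X = (K.comap j).index * (j.range ⊔ K).index := by
        rw [codegree_mul_finrank, hindex]
    _ = codegree τ * s * ((j.range ⊔ K).index * finrank k W) := by
        rw [hs, ← codegree_mul_finrank τ]
        ring
    _ = codegree τ * (s * r) * finrank k X := by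
        rw [hr]
        ring

theorem subgroup_isSubnormal_of_isSubnormal {G : Type*} [Group G] {M : Subgroup G}
    (hM : IsSubnormal M) : M.IsSubnormal := by
  obtain ⟨n, s, rfl, htop, hs⟩ := hM
  suffices h : ∀ i, (s i).IsSubnormal from h 0
  refine Fin.reverseInduction (htop ▸ .top) fun i hi ↦ ?_
  exact .step _ _ (hs i).1 hi (hs i).2

theorem codegree_dvd_codegree_of_isSubnormal {k G : Type*} {V W : Type v} [Field k]
    [IsAlgClosed k] [CharZero k] [Group G] [Finite G] [AddCommGroup V] [Module k V]
    [FiniteDimensional k V] [AddCommGroup W] [Module k W] [FiniteDimensional k W] {H : Subgroup G}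
    (hH : H.IsSubnormal) {σ : Representation k G V} [σ.IsIrreducible]
    {τ : Representation k H W} [τ.IsIrreducible] {f : IntertwiningMap τ (restrict σ H)}
    (hf : f ≠ 0) : codegree τ ∣ codegree σ := by
  induction hH generalizing W with
  | top =>
    have : (⊤ : Subgroup G).subtype.range.Normal := by
      rw [Subgroup.range_subtype]
      infer_instance
    exact codegree_dvd_codegree_of_normal_range hf
  | step H K hHK _ hN ih =>
    obtain ⟨w, hw⟩ := DFunLike.exists_ne hf
    obtain ⟨S, _, p, hp⟩ := exists_isIrreducible_apply_ne_zero (ρ := restrict σ K) hw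
    let ι : IntertwiningMap S.toRepresentation (restrict σ K) :=
      ⟨S.toSubmodule.subtype, fun _ ↦ rfl⟩
    have hι : ι ≠ 0 := fun h ↦ hp (Subtype.ext (DFunLike.congr_fun h (p (f w))))
    let φ : IntertwiningMap τ (MonoidHom.comp S.toRepresentation (Subgroup.inclusion hHK)) :=
      ⟨p.toLinearMap ∘ₗ f.toLinearMap, fun h ↦ LinearMap.ext fun x ↦
        (congrArg p (IntertwiningMap.isIntertwining _ _ f h x)).trans
          (IntertwiningMap.isIntertwining _ _ p (Subgroup.inclusion hHK h) (f x))⟩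
    have hφ : φ ≠ 0 := fun h ↦ hp (DFunLike.congr_fun h w)
    have : (Subgroup.inclusion hHK).range.Normal := by rwa [Subgroup.inclusion_range]
    exact (codegree_dvd_codegree_of_normal_range hφ).trans (ih hι)

end Subnormal

section FDRep

theorem cod_eq_codegree {G : Type} [Group G] (V : FDRep ℂ G) : cod V = codegree V.ρ := by
  have hker : repKer V = MonoidHom.ker V.ρ := by
    ext g
    rw [repKer, MonoidHom.mem_ker, MonoidHom.mem_ker, Units.ext_iff]
    rfl
  rw [cod, codegree, hker]

variable {k G : Type u} [Field k] [Group G]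

theorem exists_intertwiningMap_ne_zero {V W : FDRep k G} {f : V ⟶ W} (hf : f ≠ 0) :
    ∃ φ : IntertwiningMap V.ρ W.ρ, φ ≠ 0 :=
  ⟨((FDRep.forget₂HomLinearEquiv V W).symm f).hom, fun h ↦
    hf ((LinearEquiv.map_eq_zero_iff _).1 (Rep.hom_ext h))⟩

theorem isIrreducible_of_simple (V : FDRep k G) [Simple V] : IsIrreducible V.ρ where
  toNontrivial := by
    have : Nontrivial V := by
      by_contra h
      have := not_nontrivial_iff_subsingleton.1 h
      exact id_nonzero V (by ext x; exact Subsingleton.elim _ _)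
    exact nontrivial_subrepresentation V.ρ
  eq_bot_or_eq_top S := by
    let i : FDRep.of S.toRepresentation ⟶ V :=
      FDRep.forget₂HomLinearEquiv _ _ (Rep.ofHom ⟨S.toSubmodule.subtype, fun _ ↦ rfl⟩)
    have : Mono i := ⟨fun {Z} a b h ↦ by
      ext x
      exact congrArg (fun φ : Z ⟶ V ↦ φ.hom.hom.hom x) h⟩
    refine or_iff_not_imp_left.2 fun hS ↦ ?_
    have hi : i ≠ 0 := fun h ↦ hS (Subrepresentation.toSubmodule_injective (eq_bot_iff.2 fun x hx ↦
      congrArg (fun φ : FDRep.of S.toRepresentation ⟶ V ↦ φ.hom.hom.hom ⟨x, hx⟩) h))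
    have := isIso_of_mono_of_nonzero hi
    refine Subrepresentation.toSubmodule_injective (eq_top_iff.2 fun x _ ↦ ?_)
    have hx : i.hom.hom.hom ((inv i).hom.hom.hom x) = x :=
      congrArg (fun φ : V ⟶ V ↦ φ.hom.hom.hom x) (IsIso.inv_hom_id i)
    rw [← hx]
    exact Subtype.property _

end FDRep

end Codegree

open Codegree in
theorem stmt3_general {k G : Type*} {V W : Type v} [Field k] [IsAlgClosed k] [CharZero k]
    [Group G] [Finite G] [AddCommGroup V] [Module k V] [FiniteDimensional k V] [AddCommGroup W]
    [Module k W] [FiniteDimensional k W] (M : Subgroup G) (hM : IsSubnormal M)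
    (σ : Representation k G V) [σ.IsIrreducible] (τ : Representation k M W) [τ.IsIrreducible]
    (hconst : ∃ f : Representation.IntertwiningMap τ (restrict σ M), f ≠ 0) :
    codegree τ ∣ codegree σ :=
  codegree_dvd_codegree_of_isSubnormal (subgroup_isSubnormal_of_isSubnormal hM) hconst.choose_spec

/-- If `M` is subnormal in `G`, `χ ∈ Irr G` and `ψ` is an irreducible
constituent of `χ|_M` (i.e. there is a nonzero `M`-homomorphism `ψ ⟶ χ|_M`),
then `cod ψ ∣ cod χ`. -/
theorem stmt3 {G : Type} [Group G] [Finite G] (M : Subgroup G) (hM : IsSubnormal M)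
    (V : FDRep ℂ G) [Simple V] (W : FDRep ℂ M) [Simple W]
    (hconst : ∃ f : W ⟶ resRep M V, f ≠ 0) :
    cod W ∣ cod V := by
  obtain ⟨f, hf⟩ := hconst
  have := Codegree.isIrreducible_of_simple V
  have := Codegree.isIrreducible_of_simple W
  rw [Codegree.cod_eq_codegree, Codegree.cod_eq_codegree]
  exact stmt3_general M hM V.ρ W.ρ (Codegree.exists_intertwiningMap_ne_zero hf)
end

section
/- If a prime p divides the order of a finite group G, then p divides cod(χ) for some irreducible character χ of G. -/
open CategoryTheory

/-!
Let `M` be the normal closure of a Sylow `p`-subgroup of `G`. The `M`-invariants of the regular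
representation have dimension `|G : M|`, which is prime to `p`, while `p` divides `|G|`. So an
invariant complement of them has dimension prime to `p`, and hence an irreducible constituent `S`
of degree prime to `p`. As `S` contains no nonzero `M`-invariant vector, its kernel `K` does not
contain `M`, so `K` misses part of a Sylow `p`-subgroup and `p` divides `|G : K|`. Finally the
degree of `S` divides `|G : K|`, and the quotient is still divisible by `p`.
-/

open Module Representation

open TannakaDuality.FiniteGroup (rightRegular)

open scoped MonoidAlgebra

universe u

section Subrepresentation

variable {k G V : Type*} [Field k] [Monoid G] [AddCommGroup V] [Module k V]
  {ρ : Representation k G V}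

instance : IsModularLattice (Subrepresentation ρ) where
  sup_inf_le_assoc_of_le {A} B {_} hAC :=
    sup_inf_le_assoc_of_le (α := Submodule k V) (x := A.toSubmodule) B.toSubmodule hAC

instance [FiniteDimensional k V] : WellFoundedLT (Subrepresentation ρ) :=
  StrictMono.wellFoundedLT (f := Subrepresentation.toSubmodule) fun _ _ h ↦ h

theorem finrank_sup_of_disjoint [FiniteDimensional k V] {A B : Subrepresentation ρ}
    (h : Disjoint A B) :
    finrank k (A ⊔ B).toSubmodule = finrank k A.toSubmodule + finrank k B.toSubmodule := by
  have hinf : A.toSubmodule ⊓ B.toSubmodule = ⊥ :=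
    congrArg Subrepresentation.toSubmodule h.eq_bot
  have hsum := Submodule.finrank_sup_add_finrank_inf_eq A.toSubmodule B.toSubmodule
  rwa [hinf, finrank_bot, add_zero] at hsum

theorem isIrreducible_toRepresentation_of_isAtom {S : Subrepresentation ρ} (hS : IsAtom S) :
    S.toRepresentation.IsIrreducible := by
  have hinj := Submodule.map_injective_of_injective S.toSubmodule.injective_subtype
  refine { exists_pair_ne := ⟨⊥, ⊤, fun h ↦ hS.ne_bot ?_⟩, eq_bot_or_eq_top := fun A ↦ ?_ }
  · have hbot : (⊥ : Submodule k S.toSubmodule) = ⊤ := congrArg Subrepresentation.toSubmodule h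
    refine Subrepresentation.toSubmodule_injective ?_
    rw [← Submodule.map_subtype_top S.toSubmodule, ← hbot, Submodule.map_bot]
    rfl
  · let B : Subrepresentation ρ :=
      { toSubmodule := A.toSubmodule.map S.toSubmodule.subtype
        apply_mem_toSubmodule := by
          rintro g _ ⟨v, hv, rfl⟩
          exact ⟨S.toRepresentation g v, A.apply_mem_toSubmodule g hv, rfl⟩ }
    have hB : B ≤ S := Submodule.map_subtype_le S.toSubmodule A.toSubmodule
    refine (hS.le_iff.1 hB).imp (fun h ↦ ?_) (fun h ↦ ?_) <;>
      refine Subrepresentation.toSubmodule_injective (hinj ?_)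
    · exact (congrArg Subrepresentation.toSubmodule h).trans (Submodule.map_bot _).symm
    · exact (congrArg Subrepresentation.toSubmodule h).trans
        (Submodule.map_subtype_top S.toSubmodule).symm

theorem exists_isAtom_le_not_dvd_finrank [IsSemisimpleRepresentation ρ] [FiniteDimensional k V]
    {n : ℕ} {U : Subrepresentation ρ} (hU : ¬ n ∣ finrank k U.toSubmodule) :
    ∃ S ≤ U, IsAtom S ∧ ¬ n ∣ finrank k S.toSubmodule := by
  obtain ⟨S, hSU, hS⟩ := exists_minimal_le_of_wellFoundedLT
    (fun A : Subrepresentation ρ ↦ ¬ n ∣ finrank k A.toSubmodule) U hU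
  have dvd_of_lt {A : Subrepresentation ρ} (hA : A < S) : n ∣ finrank k A.toSubmodule :=
    not_not.1 (hS.not_prop_of_lt hA)
  refine ⟨S, hSU, ⟨?_, fun A hAS ↦ ?_⟩, hS.prop⟩
  · rintro rfl
    exact hS.prop (finrank_bot k V ▸ dvd_zero n)
  · by_contra hA
    obtain ⟨B, hdisj, rfl⟩ := IsModularLattice.exists_disjoint_and_sup_eq hAS.le
    have hBS : B < A ⊔ B := right_lt_sup.2 fun hAB ↦ hA (hdisj.eq_bot_of_le hAB)
    exact hS.prop (finrank_sup_of_disjoint hdisj ▸ dvd_add (dvd_of_lt hAS) (dvd_of_lt hBS))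

theorem isIrreducible_of_comp {H : Type*} [Monoid H] (σ : Representation k H V) (f : G →* H)
    [IsIrreducible (σ.comp f)] : IsIrreducible σ := by
  let res (A : Subrepresentation σ) : Subrepresentation (σ.comp f) :=
    ⟨A.toSubmodule, fun g ↦ A.apply_mem_toSubmodule (f g)⟩
  have hres : Function.Injective res := fun _ _ h ↦ Subrepresentation.toSubmodule_injective
    (congrArg (Subrepresentation.toSubmodule (ρ := σ.comp f)) h)
  have hne : (⊥ : Subrepresentation σ) ≠ ⊤ := fun h ↦ bot_ne_top (congrArg res h)
  exact
    { exists_pair_ne := ⟨⊥, ⊤, hne⟩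
      eq_bot_or_eq_top := fun A ↦
        (eq_bot_or_eq_top (res A)).imp (@hres A ⊥) (@hres A ⊤) }

end Subrepresentation

section Invariants

variable {k G V : Type*} [Field k] [Group G] [AddCommGroup V] [Module k V]

theorem mem_ker_asGroupHom {ρ : Representation k G V} {g : G} :
    g ∈ (asGroupHom ρ).ker ↔ ∀ v, ρ g v = v := by
  rw [MonoidHom.mem_ker, Units.ext_iff, asGroupHom_apply, LinearMap.ext_iff]
  rfl

/-- The vectors fixed by a normal subgroup, as a subrepresentation of the whole group. -/
noncomputable def invariantsSubrepresentation (ρ : Representation k G V) (N : Subgroup G)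
    [N.Normal] : Subrepresentation ρ where
  toSubmodule := invariants (ρ.comp N.subtype)
  apply_mem_toSubmodule g := le_comap_invariants ρ N g

theorem not_le_ker_of_disjoint_invariants {ρ : Representation k G V} {N : Subgroup G} [N.Normal]
    {S : Subrepresentation ρ} (hS : S ≠ ⊥) (hdisj : Disjoint S (invariantsSubrepresentation ρ N)) :
    ¬ N ≤ (asGroupHom S.toRepresentation).ker := by
  refine fun hN ↦ hS (hdisj.eq_bot_of_le fun v hv n ↦ ?_)
  exact congrArg Subtype.val (mem_ker_asGroupHom.1 (hN n.2) ⟨v, hv⟩)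

theorem finrank_invariants_rightRegular {k G : Type u} [Field k] [Group G] [Finite G]
    (H : Subgroup G) :
    finrank k (invariants ((rightRegular (k := k)).comp H.subtype)) = H.index := by
  have hrange : invariants ((rightRegular (k := k)).comp H.subtype) =
      (LinearMap.funLeft k k (QuotientGroup.mk : G → G ⧸ H)).range := by
    ext f
    refine ⟨fun hf ↦ ⟨fun q ↦ f q.out, funext fun x ↦ ?_⟩, ?_⟩
    · obtain ⟨h, hh⟩ := QuotientGroup.mk_out_eq_mul H x
      exact (congrArg f hh).trans (congrFun (hf h) x)
    · rintro ⟨φ, rfl⟩ h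
      exact funext fun x ↦ congrArg φ (QuotientGroup.mk_mul_of_mem x h.2)
  have := Fintype.ofFinite (G ⧸ H)
  rw [hrange, LinearMap.finrank_range_of_inj
    (LinearMap.funLeft_injective_of_surjective k k _ QuotientGroup.mk_surjective),
    finrank_fintype_fun_eq_card, Subgroup.index, Nat.card_eq_fintype_card]

end Invariants

section PGroup

variable {G : Type*} [Group G] {p : ℕ} [Fact p.Prime]

theorem le_of_isPGroup_of_not_dvd_index {P K : Subgroup G} [K.Normal] [Finite P]
    (hP : IsPGroup p P) (hK : ¬ p ∣ K.index) : P ≤ K := by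
  obtain ⟨n, hn⟩ := IsPGroup.iff_card.1 hP
  have hcop : (Nat.card P).Coprime K.index :=
    hn ▸ Nat.Coprime.pow_left n ((Nat.Prime.coprime_iff_not_dvd Fact.out).2 hK)
  exact Subgroup.relIndex_eq_one.1 <| Nat.eq_one_of_dvd_coprimes hcop
    (Subgroup.relIndex_dvd_card K P) (Subgroup.relIndex_dvd_index_of_normal K P)

theorem exists_isAtom_not_dvd_finrank_and_dvd_index_ker {k V : Type*} [Field k] [Finite G]
    [NeZero (Nat.card G : k)] [AddCommGroup V] [Module k V] [FiniteDimensional k V]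
    {ρ : Representation k G V} (P : Sylow p G) (hρ : p ∣ finrank k V)
    (hinv : ¬ p ∣ finrank k
      (invariants (ρ.comp (Subgroup.normalClosure (P : Set G)).subtype))) :
    ∃ S : Subrepresentation ρ, IsAtom S ∧ ¬ p ∣ finrank k S.toSubmodule ∧
      p ∣ (asGroupHom S.toRepresentation).ker.index := by
  set U := invariantsSubrepresentation ρ (Subgroup.normalClosure (P : Set G))
  obtain ⟨C, hUC⟩ := exists_isCompl U
  have hdim : finrank k V = finrank k U.toSubmodule + finrank k C.toSubmodule := by
    rw [← finrank_sup_of_disjoint hUC.disjoint, hUC.sup_eq_top]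
    exact (finrank_top k V).symm
  have hC : ¬ p ∣ finrank k C.toSubmodule := fun hC ↦ hinv ((Nat.dvd_add_left hC).1 (hdim ▸ hρ))
  obtain ⟨S, hSC, hS, hpS⟩ := exists_isAtom_le_not_dvd_finrank hC
  refine ⟨S, hS, hpS, not_not.1 fun hK ↦ ?_⟩
  refine not_le_ker_of_disjoint_invariants hS.ne_bot (hUC.disjoint.symm.mono_left hSC) ?_
  exact Subgroup.normalClosure_le_normal (le_of_isPGroup_of_not_dvd_index P.isPGroup' hK)

end PGroup

section Degree

variable {k G V : Type*} [Field k] [IsAlgClosed k] [AddCommGroup V] [Module k V]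
  [FiniteDimensional k V]

theorem isIntegral_trace_of_isIntegral {R : Type*} [CommRing R] [Algebra R k] [Module R V]
    [IsScalarTower R k V] {f : End k V} (hf : IsIntegral R f) :
    IsIntegral R (LinearMap.trace k V f) := by
  rw [End.trace_eq_sum_roots_charpoly_of_splits (IsAlgClosed.splits _)]
  refine IsIntegral.multiset_sum fun μ hμ ↦ ?_
  have hμ' : f.HasEigenvalue μ :=
    (End.hasEigenvalue_iff_isRoot_charpoly f μ).2 (Polynomial.isRoot_of_mem_roots hμ)
  obtain ⟨v, hv⟩ := hμ'.exists_hasEigenvector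
  obtain ⟨q, hq, hqf⟩ := hf
  have hqv : (q.map (algebraMap R k)).eval μ • v = 0 := by
    rw [← End.aeval_apply_of_hasEigenvector hv, Polynomial.aeval_map_algebraMap,
      Polynomial.aeval_def, hqf, LinearMap.zero_apply]
  refine ⟨q, hq, ?_⟩
  rw [← Polynomial.eval_map]
  exact (smul_eq_zero.1 hqv).resolve_right hv.2

variable [Group G]

theorem isIntegral_character [Finite G] (ρ : Representation k G V) (g : G) :
    IsIntegral ℤ (ρ.character g) := by
  refine isIntegral_trace_of_isIntegral (IsIntegral.of_pow (orderOf_pos g) ?_)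
  rw [← map_pow, pow_orderOf_eq_one, map_one]
  exact isIntegral_one

theorem exists_sum_smul_eq_smul_one [Fintype G] (ρ : Representation k G V) [ρ.IsIrreducible]
    {f : G → k} (hf : ∀ g h, f (h * g * h⁻¹) = f g) :
    ∃ c : k, ∑ g, f g • ρ g = c • (1 : End k V) := by
  set T : End k V := ∑ g, f g • ρ g
  have hT (x : G) : T ∘ₗ ρ x = ρ x ∘ₗ T := by
    change T * ρ x = ρ x * T
    simp only [T, Finset.sum_mul, Finset.mul_sum, smul_mul_assoc, mul_smul_comm, ← map_mul]
    refine Fintype.sum_equiv (MulAut.conj x⁻¹).toEquiv _ _ fun g ↦ ?_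
    simp [← hf g x⁻¹, mul_assoc]
  obtain ⟨c, hc⟩ :=
    (IsIrreducible.algebraMap_intertwiningMap_bijective_of_isAlgClosed (ρ := ρ)).2 ⟨T, hT⟩
  exact ⟨c, (congrArg IntertwiningMap.toLinearMap hc).symm⟩

theorem sum_character_mul_character_inv [Fintype G] [NeZero (Nat.card G : k)]
    (ρ : Representation k G V) [ρ.IsIrreducible] :
    ∑ g, ρ.character g * ρ.character g⁻¹ = Nat.card G := by
  have := invertibleOfNonzero (NeZero.ne (Nat.card G : k))
  have h := char_orthonormal ρ ρ
  rwa [if_pos ⟨Representation.Equiv.refl ρ⟩, inv_mul_eq_iff_eq_mul₀ (NeZero.ne _), mul_one] at h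

theorem dvd_of_isIntegral_of_mul_natCast_eq {K : Type*} [Field K] [CharZero K] {c : K} {m n : ℕ}
    (hc : IsIntegral ℤ c) (h : c * n = m) : n ∣ m := by
  rcases eq_or_ne n 0 with rfl | hn
  · simpa [eq_comm] using h
  have hn' : (n : ℚ) ≠ 0 := Nat.cast_ne_zero.2 hn
  have hcq : c = algebraMap ℚ K (m / n) := by
    rw [map_div₀, map_natCast, map_natCast, eq_div_iff (Nat.cast_ne_zero.2 hn), h]
  rw [hcq, isIntegral_algebraMap_iff (algebraMap ℚ K).injective] at hc
  obtain ⟨a, ha : (a : ℚ) = m / n⟩ := IsIntegrallyClosed.isIntegral_iff.1 hc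
  refine Int.natCast_dvd_natCast.1 ⟨a, ?_⟩
  rw [eq_div_iff hn'] at ha
  exact_mod_cast ha.symm.trans (mul_comm _ _)

/-- The central element `∑ g, χ(g⁻¹) g` has coefficients in the ring `𝒪` of algebraic integers, so
it is integral over `𝒪` as an element of the finite `𝒪`-algebra `𝒪[G]`. It acts on the
representation as the scalar `|G| / χ(1)`. -/
theorem finrank_dvd_card [CharZero k] [Finite G] (ρ : Representation k G V) [ρ.IsIrreducible] :
    finrank k V ∣ Nat.card G := by
  have := Fintype.ofFinite G
  let 𝒪 := integralClosure ℤ k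
  let χ (g : G) : 𝒪 := ⟨ρ.character g⁻¹, isIntegral_character ρ g⁻¹⟩
  let z : 𝒪[G] := ∑ g, MonoidAlgebra.single g (χ g)
  have hz : MonoidAlgebra.lift 𝒪 (End k V) G ρ z = ∑ g, ρ.character g⁻¹ • ρ g := by
    simp only [z, map_sum, MonoidAlgebra.lift_single]
    rfl
  obtain ⟨c, hc⟩ := exists_sum_smul_eq_smul_one ρ (f := fun g ↦ ρ.character g⁻¹)
    fun g h ↦ by rw [← char_conj ρ g⁻¹ h]; group
  have hint : IsIntegral 𝒪 c := by
    have hzint := (IsIntegral.of_finite 𝒪 z).map (MonoidAlgebra.lift 𝒪 (End k V) G ρ)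
    rw [hz, hc, ← Algebra.algebraMap_eq_smul_one] at hzint
    have : Nontrivial V := IsSimpleModule.nontrivial k[G] ρ.asModule
    exact (isIntegral_algebraMap_iff (algebraMap k (End k V)).injective).1 hzint
  refine dvd_of_isIntegral_of_mul_natCast_eq (isIntegral_trans (A := 𝒪) c hint) ?_
  have htrace := congrArg (LinearMap.trace k V) hc
  rw [map_sum, map_smul, LinearMap.trace_one, smul_eq_mul] at htrace
  rw [← htrace, ← sum_character_mul_character_inv ρ]
  exact Finset.sum_congr rfl fun g _ ↦ (map_smul _ _ _).trans (mul_comm _ _)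

theorem finrank_dvd_index_ker [CharZero k] [Finite G] (ρ : Representation k G V)
    [ρ.IsIrreducible] : finrank k V ∣ (asGroupHom ρ).ker.index := by
  let ρ' : Representation k (asGroupHom ρ).range V :=
    (Units.coeHom (End k V)).comp (asGroupHom ρ).range.subtype
  have hρ' : ρ'.comp (asGroupHom ρ).rangeRestrict = ρ := MonoidHom.ext (asGroupHom_apply ρ)
  have : IsIrreducible (ρ'.comp (asGroupHom ρ).rangeRestrict) := by rwa [hρ']
  have := isIrreducible_of_comp ρ' (asGroupHom ρ).rangeRestrict
  have : Finite (asGroupHom ρ).range := Set.finite_range (asGroupHom ρ)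
  rw [Subgroup.index_ker]
  exact finrank_dvd_card ρ'

end Degree

section

variable {k G : Type u} [Field k] [IsAlgClosed k] [CharZero k] [Group G] [Finite G]

theorem simple_of_isIrreducible {V : Type u} [AddCommGroup V] [Module k V]
    [FiniteDimensional k V] (ρ : Representation k G V) [ρ.IsIrreducible] :
    Simple (FDRep.of ρ) := by
  have := Fintype.ofFinite G
  exact (FDRep.simple_iff_char_is_norm_one _).2 (sum_character_mul_character_inv ρ)

theorem stmt4_general {p : ℕ} (hp : p.Prime) (hdvd : p ∣ Nat.card G) :
    ∃ V : FDRep k G, Simple V ∧ ¬ p ∣ finrank k V ∧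
      p ∣ (asGroupHom V.ρ).ker.index / finrank k V := by
  have := Fact.mk hp
  let P : Sylow p G := default
  have hP : ¬ p ∣ (Subgroup.normalClosure (P : Set G)).index := fun h ↦
    P.not_dvd_index (h.trans (Subgroup.index_dvd_of_le Subgroup.subset_normalClosure))
  have hdim : finrank k (G → k) = Nat.card G := by
    have := Fintype.ofFinite G
    rw [finrank_fintype_fun_eq_card, Nat.card_eq_fintype_card]
  obtain ⟨S, hS, hpS, hpK⟩ := exists_isAtom_not_dvd_finrank_and_dvd_index_ker
    (ρ := rightRegular (k := k) (G := G)) P (hdim ▸ hdvd) (by rwa [finrank_invariants_rightRegular])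
  have := isIrreducible_toRepresentation_of_isAtom hS
  refine ⟨FDRep.of S.toRepresentation, simple_of_isIrreducible _, hpS, ?_⟩
  refine (hp.coprime_iff_not_dvd.2 hpS).dvd_of_dvd_mul_left ?_
  exact (Nat.mul_div_cancel' (finrank_dvd_index_ker S.toRepresentation)).symm ▸ hpK

end

/-- If a prime `p` divides `|G|`, then `p` divides `cod χ` for some
irreducible character `χ` of `G`. -/
theorem stmt4 {G : Type} [Group G] [Finite G] {p : ℕ} (hp : p.Prime)
    (hdvd : p ∣ Nat.card G) :
    ∃ V : FDRep ℂ G, Simple V ∧ p ∣ cod V := by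
  obtain ⟨V, hV, -, hpV⟩ := stmt4_general (k := ℂ) hp hdvd
  exact ⟨V, hV, hpV⟩
end

section
/- Let G be a finite group with a normal subgroup V = V₁ × ⋯ × V_t, where each V_i is an abelian minimal normal subgroup of G and the V_i are pairwise non-isomorphic as G-modules. If λ = λ₁ × ⋯ × λ_t with each λ_i a nontrivial irreducible character of V_i, then for every χ ∈ Irr(G) lying over λ one has ker(χ) ∩ V = 1 and |V| divides cod(χ). -/
open CategoryTheory

/-!
A nontrivial normal subgroup `K ≤ V` of `G` contains some `V i`. Indeed, let `s` be a minimal set of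
indices for which `N = K ⊓ ∏ i ∈ s, V i` is nontrivial. By minimality, `N` projects isomorphically
onto `V i` for every `i ∈ s`, and the `V i` being pairwise non-isomorphic, `s` is a singleton. Since
no `lam i` is trivial, `ker χ` contains no `V i`, so `ker χ ⊓ V = ⊥`.

Now `V` acts on a nonzero vector `x` through a linear character, as in Itô's theorem on character
degrees. If `P` is the projection onto the corresponding weight space, Fourier inversion gives
`(|G : V| / χ(1)) • x = ∑ q : G ⧸ V, tr (ρ q⁻¹ * P) • ρ q x`. Either `ρ g` commutes with `P` or
`P * ρ g * P = 0`; in both cases some power of `ρ g * P` is idempotent, so the traces are algebraic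
integers. Multiplication by `|G : V| / χ(1)` therefore preserves the span of the orbit of `x` over
the algebraic integers, and this rational number is an integer. Applied to `G ⧸ ker χ`, in which `V`
embeds, this says that `χ(1) * |V|` divides `|G : ker χ|`.
-/

open Module Representation

section Groups

variable {G : Type*} [Group G]

/-- `A` is a minimal normal subgroup of `G`. -/
structure IsMinimalNormal (A : Subgroup G) : Prop where
  normal : A.Normal
  ne_bot : A ≠ ⊥
  eq_bot_or_eq : ∀ C : Subgroup G, C.Normal → C ≤ A → C = ⊥ ∨ C = A

/-- `A` and `B` are isomorphic as groups with an action of `G` by conjugation. The clause on pairs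
`x, y` states equivariance without presupposing that `A` is normal. -/
def ConjIsomorphic (A B : Subgroup G) : Prop :=
  ∃ e : A ≃* B, ∀ (g : G) (x y : A), (y : G) = g * x * g⁻¹ → (e y : G) = g * e x * g⁻¹

theorem ConjIsomorphic.symm {A B : Subgroup G} [A.Normal] (h : ConjIsomorphic A B) :
    ConjIsomorphic B A := by
  obtain ⟨e, he⟩ := h
  refine ⟨e.symm, fun g x y hxy => ?_⟩
  let z : A := ⟨g * e.symm x * g⁻¹, Subgroup.Normal.conj_mem ‹_› _ (e.symm x).2 g⟩
  have hz : e z = y := Subtype.ext (by simpa [hxy] using he g (e.symm x) z rfl)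
  rw [← hz, e.symm_apply_apply]

theorem ConjIsomorphic.trans {A B C : Subgroup G} (hAB : ConjIsomorphic A B)
    (hBC : ConjIsomorphic B C) : ConjIsomorphic A C := by
  obtain ⟨e, he⟩ := hAB
  obtain ⟨f, hf⟩ := hBC
  exact ⟨e.trans f, fun g x y hxy => hf g _ _ (he g x y hxy)⟩

theorem injective_mk_comp_subtype_of_disjoint {A W : Subgroup G} [W.Normal] (h : Disjoint A W) :
    Function.Injective ((QuotientGroup.mk' W).comp A.subtype) := by
  rw [← MonoidHom.ker_eq_bot_iff, ← MonoidHom.comap_ker, QuotientGroup.ker_mk',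
    ← Subgroup.subgroupOf, Subgroup.subgroupOf_eq_bot]
  exact h.symm

theorem conjIsomorphic_of_sup_eq_sup {A B W : Subgroup G} [B.Normal] [W.Normal]
    (hA : Disjoint A W) (hB : Disjoint B W) (h : A ⊔ W = B ⊔ W) : ConjIsomorphic A B := by
  let π := QuotientGroup.mk' W
  have hAinj : Function.Injective (π.comp A.subtype) := injective_mk_comp_subtype_of_disjoint hA
  have hBinj : Function.Injective (π.comp B.subtype) := injective_mk_comp_subtype_of_disjoint hB
  have hrange : (π.comp A.subtype).range = (π.comp B.subtype).range := by
    simp only [MonoidHom.range_comp, Subgroup.range_subtype]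
    rw [Subgroup.map_eq_map_iff, QuotientGroup.ker_mk', h]
  let e : A ≃* B := (MonoidHom.ofInjective hAinj).trans
    ((MulEquiv.subgroupCongr hrange).trans (MonoidHom.ofInjective hBinj).symm)
  have he : ∀ x : A, π (e x) = π x := fun x =>
    congrArg Subtype.val ((MonoidHom.ofInjective hBinj).apply_symm_apply _)
  refine ⟨e, fun g x y hxy => ?_⟩
  let z : B := ⟨g * e x * g⁻¹, Subgroup.Normal.conj_mem ‹_› _ (e x).2 g⟩
  have hz : π (e y) = π z := by simp only [he, hxy, z, map_mul]
  exact congrArg Subtype.val (hBinj (a₁ := e y) (a₂ := z) hz)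

theorem IsMinimalNormal.conjIsomorphic_of_le_sup {A N W : Subgroup G} (hA : IsMinimalNormal A)
    [N.Normal] [W.Normal] (hN : N ≠ ⊥) (hAW : Disjoint A W) (hNW : Disjoint N W)
    (hle : N ≤ A ⊔ W) : ConjIsomorphic N A := by
  have := hA.normal
  suffices h : A ≤ N ⊔ W from conjIsomorphic_of_sup_eq_sup hNW hAW
    (le_antisymm (sup_le hle le_sup_right) (sup_le h le_sup_right))
  obtain hbot | heq := hA.eq_bot_or_eq (A ⊓ (N ⊔ W)) inferInstance inf_le_left
  · refine absurd (le_bot_iff.mp (hNW le_rfl fun n hn => ?_)) hN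
    obtain ⟨a, ha, w, hw, rfl⟩ := Subgroup.mem_sup_of_normal_right.mp (hle hn)
    have ha' : a ∈ N ⊔ W := by
      simpa using mul_mem (le_sup_left (b := W) hn) (le_sup_right (a := N) (inv_mem hw))
    obtain rfl : a = 1 := (Subgroup.eq_bot_iff_forall _).mp hbot a ⟨ha, ha'⟩
    simpa using hw
  · exact inf_eq_left.mp heq

theorem exists_finset_inf_biSup_ne_bot {ι : Type*} {V : ι → Subgroup G} {K : Subgroup G}
    (hK : K ≠ ⊥) (hle : K ≤ ⨆ i, V i) : ∃ s : Finset ι, K ⊓ ⨆ i ∈ s, V i ≠ ⊥ := by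
  obtain ⟨k, hkK, hk⟩ := K.bot_or_exists_ne_one.resolve_left hK
  have hdir : Directed (· ≤ ·) fun s : Finset ι => ⨆ i ∈ s, V i :=
    Monotone.directed_le fun _ _ hst => biSup_mono hst
  have hkV := hle hkK
  rw [iSup_eq_iSup_finset, Subgroup.mem_iSup_of_directed hdir] at hkV
  obtain ⟨s, hs⟩ := hkV
  exact ⟨s, fun h => hk ((Subgroup.eq_bot_iff_forall _).mp h k ⟨hkK, hs⟩)⟩

theorem exists_le_of_normal_le_iSup {ι : Type*} {V : ι → Subgroup G}
    (hV : ∀ i, IsMinimalNormal (V i)) (hind : iSupIndep V)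
    (hniso : Pairwise fun i j => ¬ ConjIsomorphic (V i) (V j))
    {K : Subgroup G} [K.Normal] (hK : K ≠ ⊥) (hle : K ≤ ⨆ i, V i) : ∃ i, V i ≤ K := by
  classical
  have hnormal (i : ι) : (V i).Normal := (hV i).normal
  have hbiSup (s : Finset ι) : (⨆ i ∈ s, V i).Normal :=
    Subgroup.biSup_normal (s : Set ι) V fun i _ => hnormal i
  obtain ⟨s, hs, hmin⟩ := exists_minimal_of_wellFoundedLT
    (fun s : Finset ι => K ⊓ ⨆ i ∈ s, V i ≠ ⊥) (exists_finset_inf_biSup_ne_bot hK hle)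
  have hiso (i : ι) (hi : i ∈ s) : ConjIsomorphic ↑(K ⊓ ⨆ j ∈ s, V j) (V i) := by
    have hN : Disjoint (K ⊓ ⨆ j ∈ s, V j) (⨆ j ∈ s.erase i, V j) := by
      by_contra h
      have hsub : ⨆ j ∈ s.erase i, V j ≤ ⨆ j ∈ s, V j :=
        biSup_mono fun j => Finset.mem_of_mem_erase
      rw [disjoint_iff, inf_assoc, inf_eq_right.mpr hsub] at h
      exact Finset.notMem_erase i s (hmin h (Finset.erase_subset i s) hi)
    have hVi : Disjoint (V i) (⨆ j ∈ s.erase i, V j) :=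
      hind.disjoint_biSup (Finset.notMem_erase i s)
    refine (hV i).conjIsomorphic_of_le_sup hs hVi hN ?_
    rw [← Finset.iSup_insert, Finset.insert_erase hi]
    exact inf_le_right
  obtain ⟨i, hi⟩ : s.Nonempty := by
    by_contra! h
    simp [h] at hs
  obtain rfl : s = {i} := Finset.eq_singleton_iff_unique_mem.mpr ⟨hi, fun j hj => by
    by_contra hji
    exact hniso hji ((hiso j hj).symm.trans (hiso i hi))⟩
  rw [Finset.iSup_singleton] at hs
  exact ⟨i, inf_eq_right.mp <|
    ((hV i).eq_bot_or_eq _ inferInstance inf_le_right).resolve_left hs⟩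

end Groups

section Integrality

theorem isIntegral_of_hasEigenvalue {R K E : Type*} [CommRing R] [Field K] [Algebra R K]
    [AddCommGroup E] [Module R E] [Module K E] [IsScalarTower R K E] {X : End K E} {c : K}
    (hX : IsIntegral R X) (hc : X.HasEigenvalue c) : IsIntegral R c := by
  obtain ⟨p, hp, hpX⟩ := hX
  obtain ⟨v, hv⟩ := hc.exists_hasEigenvector
  refine ⟨p, hp, ?_⟩
  have hpv : Polynomial.eval c (p.map (algebraMap R K)) • v = 0 := by
    rw [← End.aeval_apply_of_hasEigenvector hv, Polynomial.aeval_map_algebraMap,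
      Polynomial.aeval_def, hpX, LinearMap.zero_apply]
  rw [← Polynomial.eval_map]
  exact (smul_eq_zero.mp hpv).resolve_right hv.2

theorem isIntegral_linearMap_trace {R K E : Type*} [CommRing R] [Field K] [IsAlgClosed K]
    [Algebra R K] [AddCommGroup E] [Module R E] [Module K E] [IsScalarTower R K E]
    [FiniteDimensional K E] {X : End K E} (hX : IsIntegral R X) :
    IsIntegral R (LinearMap.trace K E X) := by
  rw [End.trace_eq_sum_roots_charpoly_of_splits (IsAlgClosed.splits _)]
  refine IsIntegral.multiset_sum fun c hc => isIntegral_of_hasEigenvalue hX ?_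
  exact (End.hasEigenvalue_iff_isRoot_charpoly X c).mpr (Polynomial.isRoot_of_mem_roots hc)

theorem isIntegral_of_isIdempotentElem {R A : Type*} [CommRing R] [Ring A] [Algebra R A] {p : A}
    (hp : IsIdempotentElem p) : IsIntegral R p := by
  nontriviality R
  refine ⟨Polynomial.X ^ 2 - Polynomial.X, ?_, by simp [sq, hp.eq]⟩
  exact Polynomial.monic_X_pow_sub (by simp)

theorem dvd_of_isIntegral_div {K : Type*} [Field K] [CharZero K] {a b : ℕ} (hb : b ≠ 0)
    (h : IsIntegral ℤ (a / b : K)) : b ∣ a := by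
  have hQ : IsIntegral ℤ (a / b : ℚ) := by
    rwa [← IsIntegral.ratCast_iff (α := K), Rat.cast_div, Rat.cast_natCast, Rat.cast_natCast]
  obtain ⟨z, hz⟩ := IsIntegrallyClosed.isIntegral_iff.mp hQ
  rw [eq_div_iff (by exact_mod_cast hb), eq_intCast] at hz
  exact Int.natCast_dvd_natCast.mp ⟨z, by rw [mul_comm]; exact_mod_cast hz.symm⟩

theorem isIntegral_of_smul_mem_span_orbit {R K E G : Type*} [CommRing R] [Field K] [Algebra R K]
    [AddCommGroup E] [Module K E] [Monoid G] [Finite G] (ρ : Representation K G E) {q : K} {x : E}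
    (hx : x ≠ 0)
    (hq : q • x ∈ Submodule.span (integralClosure R K) (Set.range fun g => ρ g x)) :
    IsIntegral R q := by
  set N := Submodule.span (integralClosure R K) (Set.range fun g => ρ g x)
  have hxN (g : G) : ρ g x ∈ N := Submodule.subset_span ⟨g, rfl⟩
  have hρN (g : G) : N ≤ N.comap ((ρ g).restrictScalars (integralClosure R K)) := by
    refine Submodule.span_le.mpr ?_
    rintro _ ⟨h, rfl⟩
    simpa using hxN (g * h)
  have hqN : N ≤ N.comap (Module.toModuleEnd (integralClosure R K) (S := K) E q) := by
    refine Submodule.span_le.mpr ?_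
    rintro _ ⟨h, rfl⟩
    simpa using hρN h hq
  refine isIntegral_trans (A := integralClosure R K) q <| isIntegral_of_smul_mem_submodule N ?_
    (Submodule.fg_span (Set.finite_range _)) q hqN
  exact (Submodule.ne_bot_iff N).mpr ⟨x, by simpa using hxN 1, hx⟩

end Integrality

section Simple

variable {K G : Type*} [Field K] [Monoid G]

/-- The inclusion of a subrepresentation as a morphism of `FDRep K G`, which turns a submodule into
a subobject to which simplicity applies. -/
noncomputable def subrepresentationInclusion (χ : FDRep K G) (σ : Subrepresentation χ.ρ) :
    FDRep.of σ.toRepresentation ⟶ χ :=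
  ⟨InducedCategory.homMk (ModuleCat.ofHom σ.toSubmodule.subtype), fun g => by ext1; rfl⟩

instance mono_subrepresentationInclusion (χ : FDRep K G) (σ : Subrepresentation χ.ρ) :
    Mono (subrepresentationInclusion χ σ) :=
  ConcreteCategory.mono_of_injective _ (Subtype.val_injective)

theorem isIrreducible_of_simple (χ : FDRep K G) [Simple χ] : IsIrreducible χ.ρ := by
  have hbot_ne_top : (⊥ : Subrepresentation χ.ρ) ≠ ⊤ := fun h => id_nonzero χ <| by
    ext x
    exact (Submodule.mem_bot K).mp (show x ∈ (⊥ : Subrepresentation χ.ρ).toSubmodule from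
      h ▸ Submodule.mem_top)
  have : Nontrivial (Subrepresentation χ.ρ) := ⟨⊥, ⊤, hbot_ne_top⟩
  refine ⟨fun σ => ?_⟩
  by_cases hzero : subrepresentationInclusion χ σ = 0
  · refine .inl (Subrepresentation.toSubmodule_injective ?_)
    refine (Submodule.eq_bot_iff _).mpr fun x hx => ?_
    exact ConcreteCategory.congr_hom hzero (⟨x, hx⟩ : σ.toSubmodule)
  · refine .inr (Subrepresentation.toSubmodule_injective ?_)
    have := isIso_of_mono_of_nonzero hzero
    refine Submodule.eq_top_iff'.mpr fun x => ?_
    obtain ⟨y, rfl⟩ :=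
      (ConcreteCategory.bijective_of_isIso (subrepresentationInclusion χ σ)).surjective x
    exact y.2

end Simple

section Schur

variable {K E G H : Type*} [Field K] [AddCommGroup E] [Module K E]

theorem isIrreducible_of_comp_s11 [Monoid G] [Monoid H] (f : G →* H) (ρ : Representation K H E)
    [IsIrreducible (ρ.comp f)] : IsIrreducible ρ := by
  let res (σ : Subrepresentation ρ) : Subrepresentation (ρ.comp f) :=
    ⟨σ.toSubmodule, fun g => σ.apply_mem_toSubmodule (f g)⟩
  have : Nontrivial (Subrepresentation ρ) := by
    refine ⟨⊥, ⊤, fun h => bot_ne_top (α := Subrepresentation (ρ.comp f)) ?_⟩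
    exact Subrepresentation.toSubmodule_injective
      (congrArg Subrepresentation.toSubmodule h : (⊥ : Submodule K E) = ⊤)
  refine ⟨fun σ => (eq_bot_or_eq_top (res σ)).imp (fun h => ?_) fun h => ?_⟩ <;>
    exact Subrepresentation.toSubmodule_injective
      (congrArg Subrepresentation.toSubmodule h :)

theorem exists_eq_smul_one_of_commute [Monoid G] [IsAlgClosed K] [FiniteDimensional K E]
    (ρ : Representation K G E) [IsIrreducible ρ] {T : End K E} (hT : ∀ g, Commute T (ρ g)) :
    ∃ c : K, T = c • 1 := by
  let f : IntertwiningMap ρ ρ := ⟨T, fun g => hT g⟩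
  obtain ⟨c, hc⟩ :=
    (IsIrreducible.algebraMap_intertwiningMap_bijective_of_isAlgClosed (ρ := ρ)).surjective f
  refine ⟨c, ?_⟩
  have := congrArg IntertwiningMap.toLinearMap hc
  rw [Algebra.algebraMap_eq_smul_one] at this
  exact this.symm

variable [Group G] [Fintype G] [IsAlgClosed K] [FiniteDimensional K E]
  (ρ : Representation K G E) [IsIrreducible ρ]

theorem finrank_smul_sum_conj (T : End K E) :
    (finrank K E : K) • ∑ g, ρ g * T * ρ g⁻¹ =
      (Fintype.card G * LinearMap.trace K E T : K) • (1 : End K E) := by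
  obtain ⟨c, hc⟩ := exists_eq_smul_one_of_commute ρ (T := ∑ g, ρ g * T * ρ g⁻¹) fun h => by
    rw [Commute, SemiconjBy, Finset.sum_mul, Finset.mul_sum]
    refine Fintype.sum_equiv (Equiv.mulLeft h⁻¹) _ _ fun g => ?_
    simp only [Equiv.coe_mulLeft, ← mul_assoc, ← map_mul]
    simp [mul_assoc]
  have htrace (g : G) : LinearMap.trace K E (ρ g * T * ρ g⁻¹) = LinearMap.trace K E T := by
    rw [LinearMap.trace_mul_comm, ← mul_assoc, ← map_mul, inv_mul_cancel, map_one, one_mul]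
  have hcT : c * finrank K E = Fintype.card G * LinearMap.trace K E T := by
    simpa [htrace] using congrArg (LinearMap.trace K E) hc.symm
  rw [hc, smul_smul, mul_comm, hcT]

theorem finrank_smul_sum_trace_smul (B : End K E) :
    (finrank K E : K) • ∑ g, LinearMap.trace K E (ρ g⁻¹ * B) • ρ g = (Fintype.card G : K) • B := by
  -- Both sides are linear in `B`, so `B` may be taken of rank one.
  obtain ⟨t, rfl⟩ := (dualTensorHomEquiv K E E).surjective B
  induction t using TensorProduct.induction_on with
  | zero => simp
  | add t u ht hu =>
    simp only [map_add, mul_add, add_smul, Finset.sum_add_distrib, smul_add, ht, hu]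
  | tmul f w =>
    ext y
    have htrace (g : G) :
        LinearMap.trace K E (ρ g⁻¹ * dualTensorHomEquiv K E E (f ⊗ₜ w)) = f (ρ g⁻¹ w) := by
      have hcomp : ρ g⁻¹ * dualTensorHomEquiv K E E (f ⊗ₜ w) = f.smulRight (ρ g⁻¹ w) := by
        ext; simp
      rw [hcomp, LinearMap.trace_smulRight]
    have hconj := LinearMap.congr_fun (finrank_smul_sum_conj ρ (f.smulRight y)) w
    simp only [LinearMap.trace_smulRight, LinearMap.smul_apply, LinearMap.sum_apply,
      End.mul_apply, LinearMap.smulRight_apply, map_smul, End.one_apply] at hconj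
    simp only [htrace, LinearMap.smul_apply, LinearMap.sum_apply]
    rw [hconj]
    simp [mul_smul]

end Schur

section WeightProj

variable {K E G H : Type*} [Field K] [AddCommGroup E] [Module K E] [Group G] [Group H] [Fintype H]

/-- The projection onto the subspace of vectors on which `H` acts through the linear character `l`;
it is the zero map if the characteristic of `K` divides the order of `H`. -/
noncomputable def weightProj (ρ : Representation K H E) (l : H →* Kˣ) : End K E :=
  (Fintype.card H : K)⁻¹ • ∑ h, (l h⁻¹ : K) • ρ h

theorem mul_weightProj (ρ : Representation K H E) (l : H →* Kˣ) (a : H) :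
    ρ a * weightProj ρ l = (l a : K) • weightProj ρ l := by
  rw [weightProj, mul_smul_comm, smul_comm (l a : K), Finset.mul_sum,
    Finset.smul_sum (r := (l a : K))]
  congr 1
  refine Fintype.sum_equiv (Equiv.mulLeft a) _ _ fun h => ?_
  simp [smul_smul, mul_left_comm (l a : K)]

theorem weightProj_mul (ρ : Representation K H E) (l : H →* Kˣ) (a : H) :
    weightProj ρ l * ρ a = (l a : K) • weightProj ρ l := by
  rw [weightProj, smul_mul_assoc, smul_comm (l a : K), Finset.sum_mul,
    Finset.smul_sum (r := (l a : K))]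
  congr 1
  refine Fintype.sum_equiv (Equiv.mulRight a) _ _ fun h => ?_
  simp [smul_smul]

theorem weightProj_apply_eq_self [CharZero K] (ρ : Representation K H E) (l : H →* Kˣ) {x : E}
    (hx : ∀ h, ρ h x = (l h : K) • x) : weightProj ρ l x = x := by
  simp [weightProj, hx, smul_smul, ← Nat.cast_smul_eq_nsmul K]

theorem isIdempotentElem_weightProj [CharZero K] (ρ : Representation K H E) (l : H →* Kˣ) :
    IsIdempotentElem (weightProj ρ l) :=
  LinearMap.ext fun x => weightProj_apply_eq_self ρ l fun h =>
    LinearMap.congr_fun (mul_weightProj ρ l h) x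

variable (ρ : Representation K G E) (A : Subgroup G) [A.Normal] [Fintype A] (l : A →* Kˣ)

theorem commute_weightProj_of_conj_eq {g : G} (hg : ∀ a, l (MulAut.conjNormal g a) = l a) :
    Commute (weightProj (ρ.comp A.subtype) l) (ρ g) := by
  rw [Commute, SemiconjBy, weightProj, smul_mul_assoc, mul_smul_comm, Finset.sum_mul,
    Finset.mul_sum]
  congr 1
  refine (Fintype.sum_equiv (MulAut.conjNormal (H := A) g).toEquiv _ _ fun a => ?_).symm
  simp only [MonoidHom.coe_comp, Function.comp_apply, MulEquiv.toEquiv_eq_coe, MulEquiv.coe_toEquiv,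
    Subgroup.coe_subtype, MulAut.conjNormal_apply, smul_mul_assoc, mul_smul_comm, ← map_mul,
    ← map_inv, hg]
  simp

theorem weightProj_mul_mul_weightProj_of_conj_ne {g : G} {a : A}
    (ha : l (MulAut.conjNormal g a) ≠ l a) :
    weightProj (ρ.comp A.subtype) l * ρ g * weightProj (ρ.comp A.subtype) l = 0 := by
  set P := weightProj (ρ.comp A.subtype) l
  have hswap : ρ (MulAut.conjNormal g a : A) * ρ g = ρ g * ρ a := by
    rw [← map_mul, ← map_mul, MulAut.conjNormal_apply, inv_mul_cancel_right]
  have hsmul : (l (MulAut.conjNormal g a) : K) • (P * ρ g * P) = (l a : K) • (P * ρ g * P) :=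
    calc (l (MulAut.conjNormal g a) : K) • (P * ρ g * P)
        = P * ρ (MulAut.conjNormal g a : A) * ρ g * P := by
          rw [← smul_mul_assoc, ← smul_mul_assoc, ← weightProj_mul]; rfl
      _ = P * ρ g * (ρ a * P) := by rw [mul_assoc P, hswap]; simp only [mul_assoc]
      _ = (l a : K) • (P * ρ g * P) := by
          rw [← mul_smul_comm, ← mul_weightProj]; rfl
  rw [← sub_eq_zero, ← sub_smul] at hsmul
  exact (smul_eq_zero.mp hsmul).resolve_left (sub_ne_zero.mpr (Units.val_injective.ne ha))

end WeightProj

theorem sum_eq_card_nsmul_sum_out {G M : Type*} [Group G] [Fintype G] [AddCommMonoid M]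
    (A : Subgroup G) [Fintype A] [Fintype (G ⧸ A)] {F : G → M}
    (hF : ∀ g, ∀ a : A, F (g * a) = F g) :
    ∑ g, F g = Fintype.card A • ∑ q : G ⧸ A, F q.out := by
  have hout (g : G) : F g = F (g : G ⧸ A).out := by
    obtain ⟨a, ha⟩ := QuotientGroup.mk_out_eq_mul A g
    rw [ha, hF]
  rw [Fintype.sum_equiv (Subgroup.groupEquivQuotientProdSubgroup (s := A)) F
    (fun p => F p.1.out) hout, Fintype.sum_prod_type]
  simp [Finset.smul_sum]

section WeightTrace

variable {K E G : Type*} [Field K] [CharZero K] [AddCommGroup E] [Module K E] [Group G]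
  (ρ : Representation K G E) (A : Subgroup G) (l : A →* Kˣ)

theorem isIntegral_mul_weightProj [Fintype A] [A.Normal] [Finite G] (g : G) :
    IsIntegral ℤ (ρ g * weightProj (ρ.comp A.subtype) l) := by
  set P := weightProj (ρ.comp A.subtype) l
  have hP : IsIdempotentElem P := isIdempotentElem_weightProj _ l
  by_cases hg : ∀ a, l (MulAut.conjNormal g a) = l a
  · have hcomm : Commute (ρ g) P := (commute_weightProj_of_conj_eq ρ A l hg).symm
    have hpow : (ρ g * P) ^ orderOf g = P := by
      rw [hcomm.mul_pow, ← map_pow, pow_orderOf_eq_one, map_one, one_mul,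
        hP.pow_eq (orderOf_pos g).ne']
    refine IsIntegral.of_pow (orderOf_pos g) ?_
    rw [hpow]
    exact isIntegral_of_isIdempotentElem hP
  · push Not at hg
    obtain ⟨a, ha⟩ := hg
    have hsq : (ρ g * P) ^ 2 = 0 := by
      rw [sq, mul_assoc, ← mul_assoc P, weightProj_mul_mul_weightProj_of_conj_ne ρ A l ha, mul_zero]
    refine IsIntegral.of_pow two_pos ?_
    rw [hsq]
    exact isIntegral_zero

theorem index_div_finrank_smul_eq_sum [IsAlgClosed K] [FiniteDimensional K E] [IsIrreducible ρ]
    [Finite G] [Fintype A] [Fintype (G ⧸ A)] {x : E} (hx0 : x ≠ 0)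
    (hx : ∀ a : A, ρ a x = (l a : K) • x) :
    (A.index / finrank K E : K) • x = ∑ q : G ⧸ A,
      LinearMap.trace K E (ρ q.out⁻¹ * weightProj (ρ.comp A.subtype) l) • ρ q.out x := by
  have := Fintype.ofFinite G
  have := nontrivial_of_ne x 0 hx0
  set P := weightProj (ρ.comp A.subtype) l
  have hPx : P x = x := weightProj_apply_eq_self _ l hx
  have hinv (g : G) (a : A) : LinearMap.trace K E (ρ (g * a)⁻¹ * P) • ρ (g * a) x =
      LinearMap.trace K E (ρ g⁻¹ * P) • ρ g x := by
    have hPa : P * ρ (a : G)⁻¹ = ((l a)⁻¹ : K) • P := by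
      simpa using weightProj_mul (ρ.comp A.subtype) l a⁻¹
    rw [mul_inv_rev, map_mul ρ, mul_assoc, LinearMap.trace_mul_comm, mul_assoc, hPa, mul_smul_comm,
      map_smul, map_mul ρ, End.mul_apply, hx, map_smul, smul_smul, smul_eq_mul, mul_right_comm,
      inv_mul_cancel₀ (l a).ne_zero, one_mul]
  have hsum := LinearMap.congr_fun (finrank_smul_sum_trace_smul ρ P) x
  simp only [LinearMap.smul_apply, LinearMap.sum_apply, hPx] at hsum
  rw [sum_eq_card_nsmul_sum_out A hinv, ← Nat.cast_smul_eq_nsmul K,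
    ← Nat.card_eq_fintype_card (α := G), ← A.card_mul_index, Nat.card_eq_fintype_card,
    Nat.cast_mul, mul_smul, smul_comm] at hsum
  have hd : (finrank K E : K) ≠ 0 := Nat.cast_ne_zero.mpr finrank_pos.ne'
  have hsum' := smul_right_injective E (Nat.cast_ne_zero.mpr Fintype.card_ne_zero) hsum
  rw [div_eq_inv_mul, mul_smul, ← hsum', inv_smul_smul₀ hd]

theorem finrank_dvd_index_of_forall_apply_eq_smul [IsAlgClosed K] [FiniteDimensional K E]
    [IsIrreducible ρ] [A.Normal] [Finite G] {x : E} (hx0 : x ≠ 0)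
    (hx : ∀ a : A, ρ a x = (l a : K) • x) : finrank K E ∣ A.index := by
  have := Fintype.ofFinite A
  have := Fintype.ofFinite (G ⧸ A)
  have := nontrivial_of_ne x 0 hx0
  refine dvd_of_isIntegral_div (K := K) finrank_pos.ne' (isIntegral_of_smul_mem_span_orbit ρ hx0 ?_)
  rw [index_div_finrank_smul_eq_sum ρ A l hx0 hx]
  refine Submodule.sum_mem _ fun q _ => ?_
  have htrace := isIntegral_linearMap_trace (isIntegral_mul_weightProj ρ A l q.out⁻¹)
  exact Submodule.smul_mem _ (⟨_, htrace⟩ : integralClosure ℤ K) (Submodule.subset_span ⟨_, rfl⟩)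

end WeightTrace

theorem exists_monoidHom_units_of_forall_exists_smul {K E H : Type*} [Field K] [AddCommGroup E]
    [Module K E] [Group H] (ρ : Representation K H E) {x : E}
    (hx0 : x ≠ 0) (hx : ∀ h, ∃ c : K, ρ h x = c • x) :
    ∃ l : H →* Kˣ, ∀ h, ρ h x = (l h : K) • x := by
  choose c hc using hx
  have hinj := smul_left_injective K hx0
  let f : H →* K :=
    { toFun := c
      map_one' := hinj (by simp [← hc])
      map_mul' := fun a b => hinj (by
        simp only [← hc, map_mul, End.mul_apply, mul_comm (c a), mul_smul]
        rw [hc b, map_smul]) }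
  exact ⟨f.toHomUnits, hc⟩

theorem exists_smul_of_mem_iSup {K E H ι : Type*} [CommSemiring K] [AddCommMonoid E] [Module K E]
    [Group H] (ρ : Representation K H E) {V : ι → Subgroup H} {x : E}
    (hx : ∀ i, ∀ v ∈ V i, ∃ c : K, ρ v x = c • x) {h : H} (hh : h ∈ ⨆ i, V i) :
    ∃ c : K, ρ h x = c • x := by
  induction hh using Subgroup.iSup_induction' with
  | hp i v hv => exact hx i v hv
  | h1 => exact ⟨1, by simp⟩
  | hmul a b _ _ ha hb =>
    obtain ⟨c, hc⟩ := ha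
    obtain ⟨d, hd⟩ := hb
    exact ⟨d * c, by rw [map_mul, End.mul_apply, hd, map_smul, hc, smul_smul]⟩

theorem mem_ker_asGroupHom_s11 {K E G : Type*} [CommSemiring K] [AddCommMonoid E] [Module K E]
    [Group G] (ρ : Representation K G E) {g : G} : g ∈ (asGroupHom ρ).ker ↔ ρ g = 1 := by
  rw [MonoidHom.mem_ker, Units.ext_iff, asGroupHom_apply, Units.val_one]

section Kernel

variable {K E G : Type*} [Field K] [AddCommGroup E] [Module K E] [Group G]
  (ρ : Representation K G E)

theorem ker_asGroupHom_inf_iSup_eq_bot {ι : Type*} {V : ι → Subgroup G}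
    (hV : ∀ i, IsMinimalNormal (V i)) (hind : iSupIndep V)
    (hniso : Pairwise fun i j => ¬ ConjIsomorphic (V i) (V j))
    {l : ∀ i, V i →* Kˣ} (hl : ∀ i, l i ≠ 1) {x : E} (hx0 : x ≠ 0)
    (hx : ∀ i (v : V i), ρ v x = (l i v : K) • x) : (asGroupHom ρ).ker ⊓ ⨆ i, V i = ⊥ := by
  by_contra hne
  have (i : ι) : (V i).Normal := (hV i).normal
  have : (⨆ i, V i).Normal := Subgroup.iSup_normal V
  obtain ⟨i, hi⟩ := exists_le_of_normal_le_iSup hV hind hniso hne inf_le_right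
  refine hl i (MonoidHom.ext fun v => Units.ext (smul_left_injective K hx0 ?_))
  have hv : ρ v = 1 := (mem_ker_asGroupHom_s11 ρ).mp (hi v.2).1
  simp [← hx, hv]

theorem finrank_mul_card_dvd_index_ker [CharZero K] [IsAlgClosed K] [FiniteDimensional K E]
    [IsIrreducible ρ] [(asGroupHom ρ).ker.FiniteIndex] {N : Subgroup G} [N.Normal]
    (hN : (asGroupHom ρ).ker ⊓ N = ⊥) {x : E} (hx0 : x ≠ 0)
    (hx : ∀ n ∈ N, ∃ c : K, ρ n x = c • x) :
    finrank K E * Nat.card N ∣ (asGroupHom ρ).ker.index := by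
  -- The image of `ρ`, a copy of `G ⧸ ker ρ`, is finite and contains a copy of `N`.
  let π := (asGroupHom ρ).rangeRestrict
  let ρ' : Representation K (asGroupHom ρ).range E :=
    (Units.coeHom (End K E)).comp (Subgroup.subtype _)
  have : IsIrreducible (ρ'.comp π) := ‹IsIrreducible ρ›
  have : IsIrreducible ρ' := isIrreducible_of_comp_s11 π ρ'
  have hindex : (asGroupHom ρ).ker.index = Nat.card (asGroupHom ρ).range := Subgroup.index_ker _
  have : Finite (asGroupHom ρ).range :=
    Nat.finite_of_card_ne_zero (hindex ▸ Subgroup.FiniteIndex.index_ne_zero)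
  have : (N.map π).Normal := ‹N.Normal›.map π (asGroupHom ρ).rangeRestrict_surjective
  have hcard : Nat.card (N.map π) = Nat.card N := by
    rw [← Subgroup.relIndex_ker, MonoidHom.ker_rangeRestrict, ← Subgroup.inf_relIndex_right, hN,
      Subgroup.relIndex_bot_left]
  obtain ⟨l, hl⟩ := exists_monoidHom_units_of_forall_exists_smul
    (ρ'.comp (N.map π).subtype) hx0 <| by
      rintro ⟨_, n, hn, rfl⟩
      exact hx n hn
  rw [hindex, ← (N.map π).card_mul_index, hcard, mul_comm]
  exact mul_dvd_mul_left _ (finrank_dvd_index_of_forall_apply_eq_smul ρ' (N.map π) l hx0 hl)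

end Kernel

theorem stmt11_general {G : Type} [Group G] {ι : Type*} {V : ι → Subgroup G}
    (hV : ∀ i, IsMinimalNormal (V i)) (hind : iSupIndep V)
    (hniso : Pairwise fun i j => ¬ ConjIsomorphic (V i) (V j))
    {lam : ∀ i, V i →* ℂˣ} (hlam : ∀ i, lam i ≠ 1)
    (χ : FDRep ℂ G) [Simple χ] [(repKer χ).FiniteIndex]
    (hover : ∃ x : χ, x ≠ 0 ∧ ∀ i (v : V i), χ.ρ v x = (lam i v : ℂ) • x) :
    repKer χ ⊓ (⨆ i, V i) = ⊥ ∧ Nat.card ↥(⨆ i, V i) ∣ cod χ := by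
  obtain ⟨x, hx0, hx⟩ := hover
  have (i : ι) : (V i).Normal := (hV i).normal
  have : (⨆ i, V i).Normal := Subgroup.iSup_normal V
  have : IsIrreducible χ.ρ := isIrreducible_of_simple χ
  have : (asGroupHom χ.ρ).ker.FiniteIndex := ‹(repKer χ).FiniteIndex›
  have hker := ker_asGroupHom_inf_iSup_eq_bot χ.ρ hV hind hniso hlam hx0 hx
  refine ⟨hker, Nat.dvd_div_of_mul_dvd <|
    finrank_mul_card_dvd_index_ker χ.ρ hker hx0 fun v hv => ?_⟩
  exact exists_smul_of_mem_iSup χ.ρ (fun i v hv => ⟨_, hx i ⟨v, hv⟩⟩) hv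

/-- Let `G` be finite with a normal subgroup `V = V₁ × ⋯ × V_t`,
where the `V i` are abelian minimal normal subgroups of `G`, pairwise non-isomorphic as
`G`-modules. If `λ = λ₁ × ⋯ × λ_t` with each `λ i` a nontrivial linear character of
`V i`, then every `χ ∈ Irr(G)` lying over `λ` satisfies `ker χ ∩ V = 1` and
`|V| ∣ cod χ`. -/
theorem stmt11 {G : Type} [Group G] [Finite G] {t : ℕ} (V : Fin t → Subgroup G)
    (hnorm : ∀ i, (V i).Normal)
    (hab : ∀ i, ∀ a ∈ V i, ∀ b ∈ V i, a * b = b * a)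
    (hmin : ∀ i, V i ≠ ⊥ ∧ ∀ C : Subgroup G, C.Normal → C ≤ V i → C = ⊥ ∨ C = V i)
    (hindep : iSupIndep V)
    (hnoniso : ∀ i j, i ≠ j →
      ¬ ∃ e : ↥(V i) ≃* ↥(V j), ∀ (g : G) (x : ↥(V i)),
        (↑(e ⟨g * ↑x * g⁻¹, (hnorm i).conj_mem ↑x x.2 g⟩) : G) = g * (↑(e x) : G) * g⁻¹)
    (lam : ∀ i, ↥(V i) →* ℂˣ) (hlam : ∀ i, lam i ≠ 1)
    (χ : FDRep ℂ G) [Simple χ]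
    (hover : ∃ x : χ, x ≠ 0 ∧ ∀ (i : Fin t) (v : ↥(V i)),
      χ.ρ ↑v x = ((lam i v : ℂ) • x)) :
    repKer χ ⊓ (⨆ i, V i) = ⊥ ∧ Nat.card ↥(⨆ i, V i) ∣ cod χ := by
  exact stmt11_general (fun i => ⟨hnorm i, (hmin i).1, (hmin i).2⟩) hindep
    (fun i j hij ⟨e, he⟩ => hnoniso i j hij ⟨e, fun g v => he g v _ rfl⟩) hlam χ hover
end

section
/- Let p, q, r be primes with p ≠ q and q ≠ r, and let G be a Frobenius group with complement P ≅ C_p and kernel Q ≅ C_q. If V is a faithful irreducible G-module over F_r, then either (1) V is irreducible as a Q-module and dim_{F_r}(V) equals the multiplicative order of r modulo q, or (2) V is not Q-irreducible and dim_{F_r}(V) equals p times the multiplicative order of r modulo q. -/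
open CategoryTheory

/-- The restriction of a representation of `G` over `ZMod r` to a subgroup `M`. -/
noncomputable def resRepZMod {r : ℕ} [Fact r.Prime] {G : Type} [Group G]
    (M : Subgroup G) (V : FDRep (ZMod r) G) : FDRep (ZMod r) ↥M :=
  FDRep.of ((V.ρ.comp M.subtype : ↥M →* _) : Representation (ZMod r) ↥M V)

/-!
Restrict `V` to the cyclic normal subgroup `N` and let `W` be a simple `k[N]`-submodule. Every
nontrivial element of `N` generates a normal subgroup of `G`, so its fixed space in `V` is zero.
Hence `k[N]` acts on `W` through a field generated by a primitive `|N|`-th root of unity, and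
`dim W` is the degree of that field, the order of `|k|` modulo `|N|`.

Conjugation makes the action of `P` on `V` semilinear over `k[N]`, and `V` is the sum of the
translates `hW`. As `|P|` is prime, the stabilizer in `P` of the maximal ideal `ann W` is trivial
or everything. If it is trivial, the translates have distinct annihilators, so `V` is their direct
sum. If it is everything, `ann V = ann W`, so `V` is a vector space over the field `K = k[N]/ann W`,
on which `P` acts faithfully by automorphisms. Dedekind's independence of characters then yields a
nonzero `P`-fixed vector; it spans a `P`-stable `K`-line, which is all of `V`.
-/

section FiniteField

open Polynomial
open scoped IntermediateField MonoidAlgebra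

theorem natDegree_minpoly_primitiveRoot {k L : Type*} [Field k] [Finite k] [Field L] [Algebra k L]
    {n : ℕ} [NeZero n] {ζ : L} (hζ : IsPrimitiveRoot ζ n) :
    (minpoly k ζ).natDegree = orderOf (Nat.card k : ZMod n) := by
  have := Fintype.ofFinite k
  obtain ⟨p, _, f, hp, hcard⟩ := FiniteField.card' k
  have := Fact.mk hp
  have : CharP L p := charP_of_injective_algebraMap (algebraMap k L).injective p
  have hpn : p.Coprime n := by
    rw [hp.coprime_iff_not_dvd, ← CharP.cast_eq_zero_iff L p]
    exact hζ.neZero'.ne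
  have hcyc : minpoly k ζ ∣ cyclotomic n k := by
    refine minpoly.dvd k ζ ?_
    rw [aeval_def, eval₂_eq_eval_map, map_cyclotomic]
    exact hζ.isRoot_cyclotomic (NeZero.pos n)
  have hint : IsIntegral k ζ := (hζ.isIntegral (NeZero.pos n)).tower_top
  rw [natDegree_of_dvd_cyclotomic_of_irreducible hcard hpn hcyc (minpoly.irreducible hint),
    ← orderOf_units, ZMod.coe_unitOfCoprime, Nat.card_eq_fintype_card, hcard]

theorem finrank_of_isSimpleModule_monoidAlgebra {k C M : Type*} [Field k] [Finite k] [CommGroup C]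
    [Finite C] [IsCyclic C] [AddCommGroup M] [Module k M] [Module k[C] M] [IsScalarTower k k[C] M]
    [IsSimpleModule k[C] M]
    (hfaith : ∀ c : C, (∀ m : M, MonoidAlgebra.of k C c • m = m) → c = 1) :
    Module.finrank k M = orderOf (Nat.card k : ZMod (Nat.card C)) := by
  obtain ⟨I, hI, ⟨e⟩⟩ := isSimpleModule_iff_quot_maximal.1 ‹IsSimpleModule k[C] M›
  let := Ideal.Quotient.field I
  let φ : C →* k[C] ⧸ I :=
    (Ideal.Quotient.mk I : k[C] →* k[C] ⧸ I).comp (MonoidAlgebra.of k C)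
  have hφ : Function.Injective φ := by
    refine (injective_iff_map_eq_one φ).2 fun c hc ↦ hfaith c fun m ↦ e.injective ?_
    rw [map_smul, Algebra.smul_def]
    exact (congrArg (· * e m) hc).trans (one_mul _)
  obtain ⟨g, hg⟩ := IsCyclic.exists_monoid_generator (α := C)
  have hζ : IsPrimitiveRoot (φ g) (Nat.card C) := by
    rw [← orderOf_eq_card_of_forall_mem_powers hg]
    exact (IsPrimitiveRoot.orderOf g).map_of_injective hφ
  have hgen : k⟮φ g⟯ = ⊤ := by
    rw [eq_top_iff]
    rintro x -
    obtain ⟨a, rfl⟩ := Ideal.Quotient.mk_surjective x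
    induction a using MonoidAlgebra.induction_on with
    | of c =>
      obtain ⟨m, rfl⟩ := hg c
      change φ (g ^ m) ∈ _
      rw [map_pow]
      exact pow_mem (IntermediateField.mem_adjoin_simple_self k _) m
    | add a b ha hb => exact add_mem ha hb
    | smul r a ha => exact IntermediateField.smul_mem _ ha
  rw [(e.restrictScalars k).finrank_eq, ← natDegree_minpoly_primitiveRoot (k := k) hζ]
  exact ((Field.primitive_element_iff_minpoly_natDegree_eq k (φ g)).1 hgen).symm

end FiniteField

section Semilinear

open scoped Pointwise

variable {k K P A V : Type*} [Group P] [CommRing A] [MulSemiringAction P A]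
  [AddCommGroup V] [Module A V] [DistribMulAction P V] [SMulDistribClass P A V]

/-- The translate `hW` of a submodule `W` by an element of a group acting semilinearly. Unlike a
`Submodule.map`, the form `{v | h⁻¹ • v ∈ W}` needs no `A`-linearity of `h`. -/
def groupTranslate (h : P) (W : Submodule A V) : Submodule A V where
  carrier := {v | h⁻¹ • v ∈ W}
  add_mem' {v w} hv hw := by
    simpa only [Set.mem_ofPred_eq, smul_add] using W.add_mem hv hw
  zero_mem' := by simp
  smul_mem' a v hv := by
    simpa only [Set.mem_ofPred_eq, smul_distrib_smul] using W.smul_mem _ hv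

theorem mem_groupTranslate {h : P} {W : Submodule A V} {v : V} :
    v ∈ groupTranslate h W ↔ h⁻¹ • v ∈ W :=
  Iff.rfl

theorem annihilator_groupTranslate (h : P) (W : Submodule A V) :
    (groupTranslate h W).annihilator = h • W.annihilator := by
  ext a
  rw [Ideal.mem_pointwise_smul_iff_inv_smul_mem, Submodule.mem_annihilator,
    Submodule.mem_annihilator]
  refine ⟨fun ha w hw ↦ ?_, fun ha v hv ↦ ?_⟩
  · have := ha (h • w) (by rwa [mem_groupTranslate, inv_smul_smul])
    rw [← inv_smul_smul h w, ← smul_distrib_smul, this, smul_zero]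
  · rw [← smul_eq_zero_iff_eq h⁻¹, smul_distrib_smul, ha _ hv]

theorem finrank_groupTranslate [Field k] [Module k V] [SMul k A] [IsScalarTower k A V]
    [SMulCommClass P k V] (h : P) (W : Submodule A V) :
    Module.finrank k (groupTranslate h W) = Module.finrank k W := by
  let e : V ≃ₗ[k] V := DistribMulAction.toLinearEquiv k V h
  have hmap : (groupTranslate h W).restrictScalars k = (W.restrictScalars k).map (e : V →ₗ[k] V) :=
    Submodule.ext fun v ↦ (Submodule.mem_map_equiv (W.restrictScalars k) (e := e)).symm
  calc
    Module.finrank k (groupTranslate h W)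
      = Module.finrank k ((W.restrictScalars k).map (e : V →ₗ[k] V)) := by rw [← hmap]; rfl
    _ = Module.finrank k W := e.finrank_map_eq (W.restrictScalars k)

variable (P A V) in
/-- Simplicity of `V` as a module over the skew group ring of `P` with coefficients in `A`: the
only `P`-stable `A`-submodules of the nonzero module `V` are `⊥` and `⊤`. -/
structure IsEquivariantlySimple : Prop where
  nontrivial : Nontrivial V
  eq_bot_or_eq_top (W : Submodule A V) : (∀ h : P, ∀ v ∈ W, h • v ∈ W) → W = ⊥ ∨ W = ⊤

theorem IsEquivariantlySimple.iSup_groupTranslate_eq_top (hV : IsEquivariantlySimple P A V)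
    {W : Submodule A V} (hW : W ≠ ⊥) : ⨆ h : P, groupTranslate h W = ⊤ := by
  refine (hV.eq_bot_or_eq_top _ fun g v hv ↦ ?_).resolve_left fun h ↦ hW ?_
  · induction hv using Submodule.iSup_induction' with
    | mem h x hx =>
      refine Submodule.mem_iSup_of_mem (g * h) ?_
      rwa [mem_groupTranslate, mul_inv_rev, mul_smul, inv_smul_smul]
    | zero => rw [smul_zero]; exact zero_mem _
    | add x y _ _ hx hy => rw [smul_add]; exact add_mem hx hy
  · refine eq_bot_iff.2 fun w hw ↦ iSup_eq_bot.1 h 1 ▸ ?_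
    rwa [mem_groupTranslate, inv_one, one_smul]

theorem IsEquivariantlySimple.annihilator_eq_of_stabilizer_eq_top
    (hV : IsEquivariantlySimple P A V)
    {W : Submodule A V} (hW : W ≠ ⊥) (hst : MulAction.stabilizer P W.annihilator = ⊤) :
    Module.annihilator A V = W.annihilator := by
  have hann (h : P) : (groupTranslate h W).annihilator = W.annihilator := by
    have : h ∈ MulAction.stabilizer P W.annihilator := hst ▸ Subgroup.mem_top h
    rw [annihilator_groupTranslate, this]
  rw [← Submodule.annihilator_top, ← hV.iSup_groupTranslate_eq_top hW, Submodule.annihilator_iSup]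
  simp only [hann, ciInf_const]

theorem isMaximal_smul (h : P) (I : Ideal A) [I.IsMaximal] : (h • I).IsMaximal := by
  rw [Ideal.pointwise_smul_eq_comap]
  exact Ideal.comap_isMaximal_of_surjective _ (RingEquiv.surjective _)

theorem iSupIndep_groupTranslate [Finite P] {W : Submodule A V} [IsSimpleModule A W]
    (hst : MulAction.stabilizer P W.annihilator = ⊥) :
    iSupIndep fun h : P ↦ groupTranslate h W := by
  have := Fintype.ofFinite P
  have hmax : W.annihilator.IsMaximal := IsSimpleModule.annihilator_isMaximal
  have hcoprime : Pairwise fun g h : P ↦ g • W.annihilator ⊔ h • W.annihilator = ⊤ := by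
    intro g h hgh
    refine Ideal.IsMaximal.coprime_of_ne (isMaximal_smul g _) (isMaximal_smul h _) fun heq ↦ hgh ?_
    have : h⁻¹ * g ∈ MulAction.stabilizer P W.annihilator := by
      rw [MulAction.mem_stabilizer_iff, mul_smul, heq, inv_smul_smul]
    rwa [hst, Subgroup.mem_bot, inv_mul_eq_one, eq_comm] at this
  have hind := Submodule.supIndep_torsionBySet_ideal (M := V) (S := Finset.univ)
    (p := fun h : P ↦ h • W.annihilator) fun g _ h _ hgh ↦ hcoprime hgh
  refine (iSupIndep_iff_supIndep_univ.2 hind).mono fun h v hv ↦ ?_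
  rw [Submodule.mem_torsionBySet_iff]
  rintro ⟨a, ha⟩
  rw [SetLike.mem_coe, ← annihilator_groupTranslate] at ha
  exact Submodule.mem_annihilator.1 ha v hv

theorem IsEquivariantlySimple.finrank_eq_card_mul [Finite P] [Field k] [Module k V] [SMul k A]
    [IsScalarTower k A V] [SMulCommClass P k V] [FiniteDimensional k V]
    (hV : IsEquivariantlySimple P A V) {W : Submodule A V} [IsSimpleModule A W]
    (hst : MulAction.stabilizer P W.annihilator = ⊥) :
    Module.finrank k V = Nat.card P * Module.finrank k W := by
  classical
  have := Fintype.ofFinite P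
  have hW : W ≠ ⊥ := (isSimpleModule_iff_isAtom.1 ‹_›).1
  have hsum : DirectSum.IsInternal fun h : P ↦ groupTranslate h W :=
    DirectSum.isInternal_submodule_of_iSupIndep_of_iSup_eq_top (iSupIndep_groupTranslate hst)
      (hV.iSup_groupTranslate_eq_top hW)
  let e : (DirectSum P fun h ↦ (groupTranslate h W).restrictScalars k) ≃ₗ[k] V :=
    .ofBijective (DirectSum.coeLinearMap _) hsum
  calc
    Module.finrank k V = ∑ h : P, Module.finrank k (groupTranslate h W) := by
      rw [← e.finrank_eq, Module.finrank_directSum]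
      rfl
    _ = Nat.card P * Module.finrank k W := by
      simp only [finrank_groupTranslate, Finset.sum_const, Finset.card_univ, smul_eq_mul,
        Nat.card_eq_fintype_card]

theorem exists_sum_smul_ne_zero [Fintype P] [Field K] [Algebra A K] [Module K V]
    [IsScalarTower A K V]
    (hinj : Function.Injective fun (h : P) (a : A) ↦ algebraMap A K (h • a)) {v : V} (hv : v ≠ 0) :
    ∃ a : A, ∑ h : P, h • a • v ≠ 0 := by
  obtain ⟨f, hf⟩ := Module.Projective.exists_dual_ne_zero K hv
  by_contra! hzero
  -- Applying `f` turns `hzero` into a linear relation between the distinct characters `a ↦ h • a`.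
  let χ (h : P) : A →* K :=
    ((algebraMap A K).comp (MulSemiringAction.toRingHom P A h) : A →+* K)
  have hχ : Function.Injective χ := fun g h hgh ↦ hinj (congrArg DFunLike.coe hgh)
  have hindep : LinearIndependent K fun h ↦ (χ h : A → K) :=
    (linearIndependent_monoidHom A K).comp χ hχ
  have hrel : ∑ h : P, f (h • v) • (χ h : A → K) = 0 := by
    ext a
    calc
      (∑ h : P, f (h • v) • (χ h : A → K)) a = ∑ h : P, f (h • a • v) := by
        rw [Finset.sum_apply]
        refine Finset.sum_congr rfl fun h _ ↦ ?_
        rw [smul_distrib_smul, ← algebraMap_smul K (h • a) (h • v), f.map_smul,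
          smul_eq_mul, mul_comm]
        rfl
      _ = 0 := by rw [← map_sum, hzero, map_zero]
  have := Fintype.linearIndependent_iff.1 hindep _ hrel 1
  rw [one_smul] at this
  exact hf this

theorem exists_ne_zero_forall_smul_eq [Finite P] [Nontrivial V] [Field K] [Algebra A K] [Module K V]
    [IsScalarTower A K V]
    (hinj : Function.Injective fun (h : P) (a : A) ↦ algebraMap A K (h • a)) :
    ∃ w : V, w ≠ 0 ∧ ∀ g : P, g • w = w := by
  have := Fintype.ofFinite P
  obtain ⟨v, hv⟩ := exists_ne (0 : V)
  obtain ⟨a, ha⟩ := exists_sum_smul_ne_zero hinj hv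
  refine ⟨_, ha, fun g ↦ ?_⟩
  rw [Finset.smul_sum]
  exact Fintype.sum_equiv (Equiv.mulLeft g) _ _ fun h ↦ (mul_smul g h _).symm

theorem isSimpleModule_of_span_singleton_eq_top {R M : Type*} [CommRing R] [AddCommGroup M]
    [Module R M] [hmax : (Module.annihilator R M).IsMaximal] {w : M}
    (hw : Submodule.span R {w} = ⊤) : IsSimpleModule R M := by
  have htors : Ideal.torsionOf R M w = Module.annihilator R M := by
    rw [← Submodule.annihilator_top, ← hw, Submodule.annihilator_span_singleton]
    rfl
  have : IsSimpleModule R (R ⧸ Ideal.torsionOf R M w) :=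
    isSimpleModule_iff_isCoatom.2 (htors ▸ hmax.out)
  exact .congr (((Ideal.quotTorsionOfEquivSpanSingleton R M w).trans (.ofTop _ hw)).symm)

theorem IsEquivariantlySimple.isSimpleModule_of_isMaximal_annihilator [Finite P]
    (hV : IsEquivariantlySimple P A V) [hmax : (Module.annihilator A V).IsMaximal]
    (hfaith : ∀ h : P, (∀ (a : A) (v : V), (h • a) • v = a • v) → h = 1) : IsSimpleModule A V := by
  let K := A ⧸ Module.annihilator A V
  let : Field K := Ideal.Quotient.field _
  let : Module K V := Module.quotientAnnihilator
  have : IsScalarTower A K V := (Module.isTorsionBySet_annihilator A V).isScalarTower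
  have hinj : Function.Injective fun (h : P) (a : A) ↦ algebraMap A K (h • a) := by
    intro g h hgh
    have hact (a : A) (v : V) : (g • a) • v = (h • a) • v := by
      simpa only [algebraMap_smul] using congrArg (· • v) (congrFun hgh a)
    refine mul_inv_eq_one.1 (hfaith _ fun a v ↦ ?_)
    rw [mul_smul, hact, smul_inv_smul]
  have := hV.nontrivial
  obtain ⟨w, hw, hfix⟩ := exists_ne_zero_forall_smul_eq (V := V) hinj
  refine isSimpleModule_of_span_singleton_eq_top (w := w) ?_
  refine (hV.eq_bot_or_eq_top _ fun h x hx ↦ ?_).resolve_left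
    (Submodule.span_singleton_eq_bot.not.2 hw)
  obtain ⟨b, rfl⟩ := Submodule.mem_span_singleton.1 hx
  rw [smul_distrib_smul, hfix]
  exact Submodule.smul_mem _ _ (Submodule.mem_span_singleton_self w)

theorem IsEquivariantlySimple.isSimpleModule_or_finrank_eq [Field k] [Module k V] [SMul k A]
    [IsScalarTower k A V] [SMulCommClass P k V] [FiniteDimensional k V]
    (hV : IsEquivariantlySimple P A V) (hP : (Nat.card P).Prime)
    (hfaith : ∀ h : P, (∀ (a : A) (v : V), (h • a) • v = a • v) → h = 1)
    (W : Submodule A V) [IsSimpleModule A W] :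
    IsSimpleModule A V ∨ Module.finrank k V = Nat.card P * Module.finrank k W := by
  have := Fact.mk hP
  have : Finite P := Nat.finite_of_card_ne_zero hP.ne_zero
  obtain hst | hst := (MulAction.stabilizer P W.annihilator).eq_bot_or_eq_top_of_prime_card
  · exact .inr (hV.finrank_eq_card_mul hst)
  · have hW : W ≠ ⊥ := (isSimpleModule_iff_isAtom.1 ‹_›).1
    have : (Module.annihilator A V).IsMaximal :=
      hV.annihilator_eq_of_stabilizer_eq_top hW hst ▸ IsSimpleModule.annihilator_isMaximal
    exact .inl (hV.isSimpleModule_of_isMaximal_annihilator hfaith)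

end Semilinear

section FDRep

variable {k G : Type*} [Field k] [Monoid G]

theorem nontrivial_of_isIrreducible {V : Type*} [AddCommGroup V] [Module k V]
    (ρ : Representation k G V) [ρ.IsIrreducible] : Nontrivial V :=
  IsSimpleModule.nontrivial (MonoidAlgebra k G) ρ.asModule

theorem isIrreducible_of_simple_s14 (V : FDRep k G) [Simple V] :
    Representation.IsIrreducible V.ρ where
  exists_pair_ne := by
    refine ⟨⊥, ⊤, fun h ↦ id_nonzero V ?_⟩
    ext v
    have : v ∈ (⊥ : Subrepresentation V.ρ) := h ▸ Submodule.mem_top (R := k)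
    exact this
  eq_bot_or_eq_top F := by
    let f : FDRep.of F.toRepresentation ⟶ V :=
      FDRep.forget₂HomLinearEquiv _ _ (Rep.ofHom ⟨F.toSubmodule.subtype, fun _ ↦ rfl⟩)
    have hmono : Mono ((forget₂ (FDRep k G) (Rep k G)).map f) :=
      (Rep.mono_iff_injective _).2 F.toSubmodule.subtype_injective
    have : Mono f := (forget₂ (FDRep k G) (Rep k G)).mono_of_mono_map hmono
    by_cases hf : f = 0
    · refine .inl (eq_bot_iff.2 fun v hv ↦ ?_)
      exact congrArg (fun t : FDRep.of F.toRepresentation ⟶ V ↦ t.hom.hom.hom ⟨v, hv⟩) hf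
    · have : IsIso f := isIso_of_mono_of_nonzero hf
      have hsurj := (Rep.epi_iff_surjective ((forget₂ (FDRep k G) (Rep k G)).map f)).1 inferInstance
      refine .inr (eq_top_iff.2 fun v _ ↦ ?_)
      obtain ⟨w, rfl⟩ := hsurj v
      exact w.2

theorem simple_of_isIrreducible_s14 (V : FDRep k G) [Representation.IsIrreducible V.ρ] : Simple V where
  mono_isIso_iff_nonzero {Y} f _ := by
    let F := forget₂ (FDRep k G) (Rep k G)
    have : Representation.IsIrreducible (F.obj V).ρ := ‹Representation.IsIrreducible V.ρ›
    refine ⟨fun hf h0 ↦ ?_, fun hf ↦ ?_⟩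
    · subst h0
      have hid := (Limits.isIsoZeroEquiv Y V hf).2
      have := nontrivial_of_isIrreducible V.ρ
      obtain ⟨v, hv⟩ := exists_ne (0 : V)
      exact hv (congrArg (fun t : V ⟶ V ↦ t.hom.hom.hom v) hid)
    · obtain hsurj | hzero := Representation.IsIrreducible.surjective_or_eq_zero (F.map f).hom
      · have : Epi (F.map f) := (Rep.epi_iff_surjective _).2 hsurj
        have : IsIso (F.map f) := isIso_of_mono_of_epi _
        exact isIso_of_reflects_iso f F
      · refine absurd ?_ hf
        ext y
        exact DFunLike.congr_fun hzero y

theorem simple_iff_isIrreducible (V : FDRep k G) :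
    Simple V ↔ Representation.IsIrreducible V.ρ :=
  ⟨fun _ ↦ isIrreducible_of_simple_s14 V, fun _ ↦ simple_of_isIrreducible_s14 V⟩

end FDRep

section CyclicNormal

variable {k G V : Type*} [Field k] [Group G] [AddCommGroup V] [Module k V]

theorem normal_of_le_of_isCyclic {Z N : Subgroup G} [hN : N.Normal] [IsCyclic N] (hZ : Z ≤ N) :
    Z.Normal where
  conj_mem z hz g := by
    obtain ⟨m, hm⟩ := (MulAut.conjNormal g : MulAut N).toMonoidHom.map_cyclic
    have : g * z * g⁻¹ = z ^ m := congrArg Subtype.val (hm ⟨z, hZ hz⟩)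
    exact this ▸ Z.zpow_mem hz m

theorem eq_one_of_apply_eq_self {N : Subgroup G} [N.Normal] [IsCyclic N]
    {ρ : Representation k G V} [ρ.IsIrreducible] (hρ : Function.Injective ρ) {n : G} (hn : n ∈ N)
    {v : V} (hv : v ≠ 0) (hnv : ρ n v = v) : n = 1 := by
  have : (Subgroup.zpowers n).Normal := normal_of_le_of_isCyclic (Subgroup.zpowers_le.2 hn)
  let F : Subrepresentation ρ :=
    ⟨_, fun g _ hx ↦ ρ.le_comap_invariants (Subgroup.zpowers n) g hx⟩
  have hmem (x : V) : x ∈ F ↔ ρ n x = x :=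
    Representation.mem_invariants_iff_of_forall_mem_zpowers (ρ.comp (Subgroup.zpowers n).subtype)
      ⟨n, Subgroup.mem_zpowers n⟩ (by rintro ⟨_, i, rfl⟩; exact ⟨i, rfl⟩) x
  obtain hF | hF := eq_bot_or_eq_top F
  · exact absurd (show v ∈ (⊥ : Subrepresentation ρ) from hF ▸ (hmem v).2 hnv) hv
  · refine hρ (LinearMap.ext fun x ↦ ?_)
    rw [map_one, Module.End.one_apply, ← hmem, hF]
    trivial

end CyclicNormal

section Clifford

open scoped MonoidAlgebra IsMulCommutative

variable {k G V : Type*} [Field k] [Group G] [AddCommGroup V] [Module k V] {N P : Subgroup G}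
  {ρ : Representation k G V}

/-- The restriction of `ρ` to `N`, as a `k[N]`-module. -/
abbrev RestrictedModule (N : Subgroup G) (ρ : Representation k G V) : Type _ :=
  Representation.asModule (ρ.comp N.subtype)

/-- The action of all of `G` on the restriction of `ρ` to `N`. -/
noncomputable local instance restrictDistribMulAction :
    DistribMulAction G (RestrictedModule N ρ) :=
  .compHom V ρ

local instance : SMulCommClass G k (RestrictedModule N ρ) where
  smul_comm g c v := (ρ g).map_smul c v

theorem of_smul_restrictedModule (n : N) (v : RestrictedModule N ρ) :
    MonoidAlgebra.of k N n • v = (n : G) • v :=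
  (Representation.asModuleEquiv_symm_map_rho (ρ.comp N.subtype) n v).symm

variable [N.Normal]

/-- The conjugation action of `G` on the group algebra of a normal subgroup. -/
noncomputable local instance conjMulSemiringAction : MulSemiringAction G k[N] :=
  .compHom k[N] ((MonoidAlgebra.domCongrAut (R := k) (A := k) (M := N)).comp MulAut.conjNormal)

theorem conj_smul_eq_domCongr (g : G) (a : k[N]) :
    g • a = MonoidAlgebra.domCongr k k (MulAut.conjNormal g) a :=
  rfl

theorem conj_smul_of (g : G) (n : N) :
    g • MonoidAlgebra.of k N n = MonoidAlgebra.of k N (MulAut.conjNormal g n) := by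
  rw [conj_smul_eq_domCongr]
  exact MonoidAlgebra.domCongr_single ..

local instance : SMulCommClass G k k[N] where
  smul_comm g c a := by rw [conj_smul_eq_domCongr, conj_smul_eq_domCongr, map_smul]

local instance : SMulDistribClass G k[N] (RestrictedModule N ρ) where
  smul_distrib_smul g a v := by
    induction a using MonoidAlgebra.induction_on with
    | of n =>
      rw [conj_smul_of, of_smul_restrictedModule, of_smul_restrictedModule,
        MulAut.conjNormal_apply, smul_smul, smul_smul, inv_mul_cancel_right]
    | add a b ha hb => simp only [add_smul, smul_add, ha, hb]
    | smul c a ha => rw [smul_assoc, smul_comm, ha, smul_comm g c a, smul_assoc c (g • a)]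

local instance : SMulDistribClass P k[N] (RestrictedModule N ρ) where
  smul_distrib_smul h a v := smul_distrib_smul (h : G) a v

theorem isEquivariantlySimple_restrictedModule [ρ.IsIrreducible] [IsMulCommutative N]
    (hNP : N ⊔ P = ⊤) :
    IsEquivariantlySimple P k[N] (RestrictedModule N ρ) where
  nontrivial := (nontrivial_of_isIrreducible ρ : Nontrivial V)
  eq_bot_or_eq_top W hW := by
    let F : Subrepresentation ρ :=
      { toSubmodule := W.restrictScalars k
        apply_mem_toSubmodule g w hw := by
          have hg : g ∈ N ⊔ P := hNP ▸ Subgroup.mem_top g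
          obtain ⟨n, hn, h, hh, rfl⟩ := Subgroup.mem_sup_of_normal_left.1 hg
          have hmem := W.smul_mem (MonoidAlgebra.of k N ⟨n, hn⟩) (hW ⟨h, hh⟩ w hw)
          rw [of_smul_restrictedModule] at hmem
          rw [map_mul]
          exact hmem }
    have hF (w) : w ∈ W ↔ w ∈ F := Iff.rfl
    refine (eq_bot_or_eq_top F).imp (fun hbot ↦ ?_) fun htop ↦ ?_
    · ext w
      rw [hF, hbot]
      rfl
    · ext w
      rw [hF, htop]
      rfl

theorem eq_one_of_forall_conj_smul_smul_eq (hρ : Function.Injective ρ)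
    (hcent : ∀ h ∈ P, (∀ n ∈ N, h * n = n * h) → h = 1) {h : P}
    (hh : ∀ (a : k[N]) (v : RestrictedModule N ρ), (h • a) • v = a • v) :
    h = 1 := by
  refine Subtype.ext (hcent h h.2 fun n hn ↦ ?_)
  have hconj : h * n * (h : G)⁻¹ = n := by
    refine hρ (LinearMap.ext fun v ↦ ?_)
    have := hh (MonoidAlgebra.of k N ⟨n, hn⟩)
      ((Representation.asModuleEquiv (ρ.comp N.subtype)).symm v)
    rw [Subgroup.smul_def, conj_smul_of, of_smul_restrictedModule, of_smul_restrictedModule] at this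
    exact this
  exact mul_inv_eq_iff_eq_mul.1 hconj

theorem finrank_submodule_restrictedModule [Finite k] [Finite N] [IsCyclic N] [ρ.IsIrreducible]
    (hρ : Function.Injective ρ)
    (W : Submodule k[N] (RestrictedModule N ρ)) [IsSimpleModule k[N] W] :
    Module.finrank k W = orderOf (Nat.card k : ZMod (Nat.card N)) := by
  refine finrank_of_isSimpleModule_monoidAlgebra fun n hn ↦ ?_
  have := IsSimpleModule.nontrivial k[N] W
  obtain ⟨w, hw⟩ := exists_ne (0 : W)
  refine Subtype.ext (eq_one_of_apply_eq_self (v := w.1) hρ n.2 (Subtype.coe_ne_coe.2 hw) ?_)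
  have := congrArg Subtype.val (hn w)
  rwa [Submodule.coe_smul, of_smul_restrictedModule] at this

open Representation in
theorem stmt14_general [Finite k] [FiniteDimensional k V] [IsCyclic N] [ρ.IsIrreducible]
    (hP : (Nat.card P).Prime) (hNP : N ⊔ P = ⊤)
    (hcent : ∀ h ∈ P, (∀ n ∈ N, h * n = n * h) → h = 1) (hρ : Function.Injective ρ) :
    (IsIrreducible (ρ.comp N.subtype) ∧
        Module.finrank k V = orderOf (Nat.card k : ZMod (Nat.card N))) ∨
      (¬ IsIrreducible (ρ.comp N.subtype) ∧
        Module.finrank k V = Nat.card P * orderOf (Nat.card k : ZMod (Nat.card N))) := by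
  have : FiniteDimensional k (RestrictedModule N ρ) := ‹FiniteDimensional k V›
  have : Finite N :=
    have := Module.finite_of_finite k (M := V →ₗ[k] V)
    .of_injective _ (hρ.comp N.subtype_injective)
  rw [irreducible_iff_isSimpleModule_asModule]
  have hM : IsEquivariantlySimple P k[N] (RestrictedModule N ρ) :=
    isEquivariantlySimple_restrictedModule hNP
  have := hM.nontrivial
  have : IsArtinian k[N] (RestrictedModule N ρ) := isArtinian_of_tower k inferInstance
  by_cases hsimple : IsSimpleModule k[N] (RestrictedModule N ρ)
  · have : IsSimpleModule k[N] (⊤ : Submodule k[N] (RestrictedModule N ρ)) :=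
      .congr Submodule.topEquiv
    refine .inl ⟨hsimple, ?_⟩
    rw [← finrank_submodule_restrictedModule hρ ⊤]
    exact (finrank_top k V).symm
  · obtain ⟨W, hW⟩ := IsAtomic.exists_atom (Submodule k[N] (RestrictedModule N ρ))
    have := isSimpleModule_iff_isAtom.2 hW
    have hrank := (hM.isSimpleModule_or_finrank_eq (k := k) hP
      (fun h ↦ eq_one_of_forall_conj_smul_smul_eq hρ hcent) W).resolve_left hsimple
    rw [finrank_submodule_restrictedModule hρ W] at hrank
    exact .inr ⟨hsimple, hrank⟩

end Clifford

/-- Let `p, q, r` be primes with `p ≠ q`, `q ≠ r`, and let `G` be a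
Frobenius group with complement `P ≅ C_p` and kernel `Q ≅ C_q`. If `V` is a faithful
irreducible `G`-module over `F_r`, then either `V` is `Q`-irreducible and
`dim V = ord_q(r)`, or `V` is not `Q`-irreducible and `dim V = p * ord_q(r)`. -/
theorem stmt14 {p q r : ℕ} (hp : p.Prime) (hq : q.Prime) [hr : Fact r.Prime]
    (hpq : p ≠ q) (hqr : q ≠ r)
    {G : Type} [Group G] [Finite G] (Q P : Subgroup G)
    (hQnorm : Q.Normal) (hQcard : Nat.card ↥Q = q) (hPcard : Nat.card ↥P = p)
    (hcompl : Q.IsComplement' P)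
    (hfrob : ∀ h ∈ P, h ≠ 1 → ∀ n ∈ Q, n ≠ 1 → h * n ≠ n * h)
    (V : FDRep (ZMod r) G) [Simple V] (hfaith : Function.Injective V.ρ) :
    (Simple (resRepZMod Q V) ∧
        Module.finrank (ZMod r) V = orderOf (r : ZMod q)) ∨
      (¬ Simple (resRepZMod Q V) ∧
        Module.finrank (ZMod r) V = p * orderOf (r : ZMod q)) := by
  subst hQcard hPcard
  have := Fact.mk hq
  have : IsCyclic Q := isCyclic_of_prime_card rfl
  have : Nontrivial Q := Finite.one_lt_card_iff_nontrivial.1 hq.one_lt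
  obtain ⟨n, hn⟩ := exists_ne (1 : Q)
  have hcent : ∀ h ∈ P, (∀ n ∈ Q, h * n = n * h) → h = 1 := fun h hh hcomm ↦
    of_not_not fun h1 ↦ hfrob h hh h1 n n.2 (OneMemClass.coe_eq_one.not.2 hn) (hcomm n n.2)
  have := isIrreducible_of_simple_s14 V
  rw [simple_iff_isIrreducible]
  have hdim := stmt14_general hp hcompl.sup_eq_top hcent hfaith
  rw [Nat.card_zmod] at hdim
  exact hdim
end
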